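/- Let k be a perfect field, I ⊆ k[x_0,...,x_n] a homogeneous unmixed radical ideal of projective dimension d ≥ 1, and f a homogeneous polynomial that is a non zero divisor modulo I. Then for all m ≥ 5·d·deg I, h_{(I,f)}(m) ≤ 3 · deg f · deg I · C(m+d−1, d−1). -/

import Mathlib

open MvPolynomial

/-- Integer-valued binomial coefficient `C(a, b)`, zero when `a < 0` or `a < b`. -/
def ichoose (a : ℤ) (b : ℕ) : ℤ := if a < 0 then 0 else (a.toNat).choose b

/-- The Hilbert function of a (homogeneous) ideal `I ⊆ k[x₀, …, xₙ]`:
`m ↦ dim_k (k[x₀, …, xₙ]/I)_m`. -/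
noncomputable def hilbF (k : Type*) [Field k] {n : ℕ}
    (I : Ideal (MvPolynomial (Fin (n+1)) k)) (m : ℕ) : ℕ :=
  Module.finrank k ((homogeneousSubmodule (Fin (n+1)) k m).map
    (Ideal.Quotient.mkₐ k I).toLinearMap)

open scoped Classical in
/-- The Hilbert polynomial of `I` (the polynomial agreeing with the Hilbert
function for all large `m`; junk value `0` if none exists). -/
noncomputable def hilbP (k : Type*) [Field k] {n : ℕ}
    (I : Ideal (MvPolynomial (Fin (n+1)) k)) : Polynomial ℚ :=
  if h : ∃ P : Polynomial ℚ, ∀ᶠ m : ℕ in Filter.atTop,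
      (hilbF k I m : ℚ) = P.eval (m : ℚ) then h.choose else 0

/-- The (algebraic) degree of a homogeneous ideal `I` of projective dimension
`d ≥ 0`: `d! · (leading coefficient of its Hilbert polynomial)`. -/
noncomputable def idealDeg (k : Type*) [Field k] {n : ℕ}
    (I : Ideal (MvPolynomial (Fin (n+1)) k)) : ℕ :=
  ⌊((hilbP k I).natDegree.factorial : ℚ) * (hilbP k I).leadingCoeff⌋₊

/-- The projective dimension of a homogeneous ideal `I` (of dimension `≥ 0`):
the degree of its Hilbert polynomial. -/
noncomputable def idealDim (k : Type*) [Field k] {n : ℕ}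
    (I : Ideal (MvPolynomial (Fin (n+1)) k)) : ℕ :=
  (hilbP k I).natDegree

/-- A homogeneous ideal: one containing all homogeneous components of its elements. -/
def IsHomogeneousIdeal {k : Type*} [Field k] {n : ℕ}
    (I : Ideal (MvPolynomial (Fin (n+1)) k)) : Prop :=
  ∀ f ∈ I, ∀ m : ℕ, homogeneousComponent m f ∈ I

/-- `I` is unmixed of projective dimension `d`: every associated prime `P` of
`k[x₀,…,xₙ]/I` satisfies `dim k[x₀,…,xₙ]/P = d + 1` (affine Krull dimension). -/
def IsUnmixed (k : Type*) [Field k] {n : ℕ}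
    (I : Ideal (MvPolynomial (Fin (n+1)) k)) (d : ℕ) : Prop :=
  ∀ P ∈ associatedPrimes (MvPolynomial (Fin (n+1)) k)
      (MvPolynomial (Fin (n+1)) k ⧸ I),
    ringKrullDim (MvPolynomial (Fin (n+1)) k ⧸ P) = ((d + 1 : ℕ) : WithBot (WithTop ℕ))

/-!
Since `f` is regular modulo `I` of degree `e`, `h_{(I,f)}(m) = h_I(m) - h_I(m - e)`, a sum of `e`
first differences of `h_I`. Green's hyperplane restriction theorem bounds a first difference of
`h_I` in terms of `h_I` itself: if `h_I(m) - h_I(m - 1) = C(x + m, m)` for a real `x ≥ 0`, then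
`h_I(m) ≥ C(x + 1 + m, m)`. Combined with `h_I(m) ≤ deg I · C(m + d, d)` this gives first
differences of at most `2 · deg I · C(m + d - 1, d - 1)` for `m` large compared with `d · deg I`.
If `e > m / 2`, the bound on `h_I(m)` alone suffices.

For the bound on `h_I`, unmixedness reduces to a prime `P`, the degrees of the minimal primes adding
up to at most `deg I`; over `k(t)` the base field is infinite. By a linear Noether normalization an
affine chart `B` of `P`, filtered by degree, satisfies `s • B ⊆ F` for a nonzero polynomial `s` in
`d` variables and a free module `F` of some rank `D` over the polynomial ring. Expanding `s • g`,
for `g` of degree at most `m`, around a point where `s` does not vanish gives `D · C(m + d, d)`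
linear conditions for vanishing to order greater than `m`, and a `g` satisfying them is zero,
because its powers vanish to higher order than their degree allows.
-/

/-! ### Hilbert functions -/

section GradedCodim

variable {k σ : Type*} [Field k]

/-- The dimension of the degree-`s` part of `k[σ]` modulo a linear subspace `V`, that is the
codimension of `k[σ]_s ∩ V` in `k[σ]_s`. It extends the Hilbert function to subspaces which need
not be ideals. -/
noncomputable def gradedCodim (s : ℕ) (V : Submodule k (MvPolynomial σ k)) : ℕ :=
  Module.finrank k ((homogeneousSubmodule σ k s).map V.mkQ)

lemma finrank_map_add_finrank_inf_ker {E W : Type*} [AddCommGroup E] [Module k E]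
    [AddCommGroup W] [Module k W] (g : E →ₗ[k] W) (U : Submodule k E) [Module.Finite k U] :
    Module.finrank k (U.map g) + Module.finrank k (U ⊓ LinearMap.ker g : Submodule k E) =
      Module.finrank k U := by
  have ker_eq : LinearMap.ker (g.domRestrict U) = (LinearMap.ker g).comap U.subtype := by
    ext x
    simp
  rw [← LinearMap.finrank_range_add_finrank_ker (g.domRestrict U), LinearMap.range_domRestrict,
    ker_eq, ← Submodule.map_comap_subtype,
    LinearEquiv.finrank_eq (Submodule.equivMapOfInjective U.subtype U.injective_subtype _)]

lemma homogeneousSubmodule_succ_le {s : ℕ} {V : Submodule k (MvPolynomial σ k)}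
    (h : ∀ i, ∀ g ∈ homogeneousSubmodule σ k s, X i * g ∈ V) :
    homogeneousSubmodule σ k (s + 1) ≤ V := by
  rw [← homogeneousSubmodule_one_pow, pow_succ', homogeneousSubmodule_one_pow,
    homogeneousSubmodule_one_eq_span_X, Submodule.mul_le]
  intro f hf g hg
  have span_le : Submodule.span k (Set.range X) ≤ V.comap (LinearMap.mulRight k g) := by
    rw [Submodule.span_le]
    rintro _ ⟨i, rfl⟩
    exact h i g hg
  exact span_le hf

variable [Finite σ]

instance finite_homogeneousSubmodule (s : ℕ) : Module.Finite k (homogeneousSubmodule σ k s) :=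
  Module.Finite.iff_fg.mpr (homogeneousSubmodule_fg σ k s)

lemma gradedCodim_add_finrank_inf (s : ℕ) (V : Submodule k (MvPolynomial σ k)) :
    gradedCodim s V +
        Module.finrank k (homogeneousSubmodule σ k s ⊓ V : Submodule k (MvPolynomial σ k)) =
      Module.finrank k (homogeneousSubmodule σ k s) := by
  have rank_nullity := finrank_map_add_finrank_inf_ker V.mkQ (homogeneousSubmodule σ k s)
  rwa [Submodule.ker_mkQ] at rank_nullity

lemma finrank_map_homogeneousSubmodule {W : Type*} [AddCommGroup W] [Module k W] (s : ℕ)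
    (g : MvPolynomial σ k →ₗ[k] W) :
    Module.finrank k ((homogeneousSubmodule σ k s).map g) = gradedCodim s (LinearMap.ker g) := by
  have := finrank_map_add_finrank_inf_ker g (homogeneousSubmodule σ k s)
  have := gradedCodim_add_finrank_inf s (LinearMap.ker g)
  omega

lemma gradedCodim_eq_zero_iff {s : ℕ} {V : Submodule k (MvPolynomial σ k)} :
    gradedCodim s V = 0 ↔ homogeneousSubmodule σ k s ≤ V := by
  rw [gradedCodim, Submodule.finrank_eq_zero, ← LinearMap.le_ker_iff_map, Submodule.ker_mkQ]

lemma gradedCodim_anti {s : ℕ} {V W : Submodule k (MvPolynomial σ k)}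
    (h : homogeneousSubmodule σ k s ⊓ V ≤ W) : gradedCodim s W ≤ gradedCodim s V := by
  have := gradedCodim_add_finrank_inf s V
  have := gradedCodim_add_finrank_inf s W
  have : Module.Finite k (homogeneousSubmodule σ k s ⊓ W : Submodule k (MvPolynomial σ k)) :=
    Submodule.finiteDimensional_of_le inf_le_left
  have := Submodule.finrank_mono (R := k) (le_inf inf_le_left h)
  omega

lemma gradedCodim_add {e : ℕ} {f : MvPolynomial σ k} (hf : f.IsHomogeneous e) (s : ℕ)
    (V : Submodule k (MvPolynomial σ k)) :
    gradedCodim (s + e) V = gradedCodim s (V.comap (LinearMap.mulLeft k f)) +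
      gradedCodim (s + e) (V ⊔ (homogeneousSubmodule σ k s).map (LinearMap.mulLeft k f)) := by
  set W := (homogeneousSubmodule σ k s).map (LinearMap.mulLeft k f) with hW
  have W_le : W ≤ homogeneousSubmodule σ k (s + e) := by
    rintro _ ⟨g, hg, rfl⟩
    exact add_comm e s ▸ hf.mul hg
  have ker_factor : LinearMap.ker (Submodule.factor (le_sup_left : V ≤ V ⊔ W)) = W.map V.mkQ := by
    simp [Submodule.factor, Submodule.mapQ, Submodule.ker_liftQ, Submodule.map_sup]
  have finrank_W : Module.finrank k (W.map V.mkQ) =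
      gradedCodim s (V.comap (LinearMap.mulLeft k f)) := by
    rw [hW, ← Submodule.map_comp, finrank_map_homogeneousSubmodule, LinearMap.ker_comp,
      Submodule.ker_mkQ]
  have rank_nullity := finrank_map_add_finrank_inf_ker
    (Submodule.factor (le_sup_left : V ≤ V ⊔ W)) ((homogeneousSubmodule σ k (s + e)).map V.mkQ)
  rw [ker_factor, inf_eq_right.mpr (Submodule.map_mono W_le), ← Submodule.map_comp,
    Submodule.factor_comp_mk, finrank_W] at rank_nullity
  simp only [gradedCodim] at rank_nullity ⊢
  omega

lemma gradedCodim_inf_le (s : ℕ) (V W : Submodule k (MvPolynomial σ k)) :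
    gradedCodim s (V ⊓ W) ≤ gradedCodim s V + gradedCodim s W := by
  have := gradedCodim_add_finrank_inf s V
  have := gradedCodim_add_finrank_inf s W
  have := gradedCodim_add_finrank_inf s (V ⊓ W)
  set H := homogeneousSubmodule σ k s
  have : FiniteDimensional k (H ⊓ V : Submodule k _) :=
    Submodule.finiteDimensional_of_le inf_le_left
  have : FiniteDimensional k (H ⊓ W : Submodule k _) :=
    Submodule.finiteDimensional_of_le inf_le_left
  have grassmann := Submodule.finrank_sup_add_finrank_inf_eq (H ⊓ V) (H ⊓ W)
  rw [← inf_inf_distrib_left] at grassmann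
  have : Module.finrank k (H ⊓ V ⊔ H ⊓ W : Submodule k _) ≤ Module.finrank k H :=
    Submodule.finrank_mono (sup_le inf_le_left inf_le_left)
  omega

end GradedCodim

section HomogeneousIdeals

variable {k : Type*} [Field k] {n : ℕ} {I J P : Ideal (MvPolynomial (Fin (n + 1)) k)}

attribute [local instance] MvPolynomial.gradedAlgebra

lemma coe_decompose_eq_homogeneousComponent {σ : Type*} (f : MvPolynomial σ k) (i : ℕ) :
    (DirectSum.decompose (homogeneousSubmodule σ k) f i : MvPolynomial σ k) =
      homogeneousComponent i f :=
  decomposition.decompose'_apply f i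

lemma homogeneousComponent_mul_of_isHomogeneous {σ : Type*} {e : ℕ} {f : MvPolynomial σ k}
    (hf : f.IsHomogeneous e) (m : ℕ) (g : MvPolynomial σ k) :
    homogeneousComponent (m + e) (g * f) = homogeneousComponent m g * f := by
  simpa only [coe_decompose_eq_homogeneousComponent] using
    DirectSum.coe_decompose_mul_add_of_right_mem (homogeneousSubmodule σ k) (a := g) (i := m) hf

lemma isHomogeneousIdeal_iff_isHomogeneous :
    IsHomogeneousIdeal I ↔ I.IsHomogeneous (homogeneousSubmodule (Fin (n + 1)) k) := by
  constructor
  · intro h i f hf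
    exact coe_decompose_eq_homogeneousComponent f i ▸ h f hf i
  · intro h f hf i
    exact coe_decompose_eq_homogeneousComponent f i ▸ h i hf

lemma IsHomogeneousIdeal.of_mem_minimalPrimes (hI : IsHomogeneousIdeal I)
    (hP : P ∈ I.minimalPrimes) : IsHomogeneousIdeal P := by
  rw [isHomogeneousIdeal_iff_isHomogeneous] at hI ⊢
  have core_le := Ideal.toIdeal_homogeneousCore_le (homogeneousSubmodule (Fin (n + 1)) k) P
  have I_le_core : I ≤ (P.homogeneousCore (homogeneousSubmodule (Fin (n + 1)) k)).toIdeal := by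
    rw [← hI.toIdeal_homogeneousCore_eq_self]
    exact Ideal.homogeneousCore_mono _ hP.1.2
  rw [Ideal.IsHomogeneous.iff_eq]
  exact le_antisymm core_le (hP.2 ⟨hP.1.1.homogeneousCore, I_le_core⟩ core_le)

lemma IsHomogeneousIdeal.inf (hI : IsHomogeneousIdeal I) (hJ : IsHomogeneousIdeal J) :
    IsHomogeneousIdeal (I ⊓ J) :=
  fun f hf m => ⟨hI f hf.1 m, hJ f hf.2 m⟩

lemma IsHomogeneousIdeal.finset_inf {s : Finset (Ideal (MvPolynomial (Fin (n + 1)) k))}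
    (h : ∀ P ∈ s, IsHomogeneousIdeal P) : IsHomogeneousIdeal (s.inf id) := by
  intro f hf m
  rw [Submodule.mem_finsetInf] at hf ⊢
  exact fun P hP => h P hP f (hf P hP) m

lemma exists_homogeneousComponent_notMem {σ : Type*} {Q : Ideal (MvPolynomial σ k)}
    {g : MvPolynomial σ k} (hg : g ∉ Q) : ∃ b, homogeneousComponent b g ∉ Q := by
  contrapose! hg
  rw [← sum_homogeneousComponent g]
  exact Q.sum_mem fun b _ => hg b

end HomogeneousIdeals

section HilbertFunction

variable {k : Type*} [Field k] {n : ℕ} {I J P : Ideal (MvPolynomial (Fin (n + 1)) k)}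

lemma hilbF_eq_gradedCodim (I : Ideal (MvPolynomial (Fin (n + 1)) k)) (m : ℕ) :
    hilbF k I m = gradedCodim m (I.restrictScalars k) := by
  rw [hilbF, finrank_map_homogeneousSubmodule]
  congr 1
  ext f
  simp [Ideal.Quotient.eq_zero_iff_mem]

lemma hilbF_top (m : ℕ) : hilbF k (⊤ : Ideal (MvPolynomial (Fin (n + 1)) k)) m = 0 :=
  have : Subsingleton (MvPolynomial (Fin (n + 1)) k ⧸ (⊤ : Ideal (MvPolynomial (Fin (n + 1)) k))) :=
    Ideal.Quotient.subsingleton_iff.mpr rfl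
  Module.finrank_zero_of_subsingleton

lemma hilbF_anti (h : I ≤ J) (m : ℕ) : hilbF k J m ≤ hilbF k I m := by
  rw [hilbF_eq_gradedCodim, hilbF_eq_gradedCodim]
  exact gradedCodim_anti (inf_le_right.trans h)

lemma hilbF_inf_le (I J : Ideal (MvPolynomial (Fin (n + 1)) k)) (m : ℕ) :
    hilbF k (I ⊓ J) m ≤ hilbF k I m + hilbF k J m := by
  simp only [hilbF_eq_gradedCodim]
  exact gradedCodim_inf_le m (I.restrictScalars k) (J.restrictScalars k)

lemma IsHomogeneousIdeal.mem_sup_span_singleton {e m : ℕ} (hI : IsHomogeneousIdeal I)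
    {f g : MvPolynomial (Fin (n + 1)) k} (hf : f.IsHomogeneous e) (hg : g.IsHomogeneous (m + e)) :
    g ∈ I ⊔ Ideal.span {f} ↔ g ∈ I.restrictScalars k ⊔
      (homogeneousSubmodule (Fin (n + 1)) k m).map (LinearMap.mulLeft k f) := by
  constructor
  · intro hgI
    obtain ⟨a, ha, _, hb, rfl⟩ := Submodule.mem_sup.mp hgI
    obtain ⟨c, rfl⟩ := Ideal.mem_span_singleton'.mp hb
    rw [← homogeneousComponent_eq_self hg, map_add, homogeneousComponent_mul_of_isHomogeneous hf]
    exact Submodule.add_mem_sup (hI a ha _)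
      ⟨_, homogeneousComponent_mem m c, mul_comm f (homogeneousComponent m c)⟩
  · intro hgI
    obtain ⟨a, ha, _, ⟨c, -, rfl⟩, rfl⟩ := Submodule.mem_sup.mp hgI
    exact Submodule.add_mem_sup ha (Ideal.mul_mem_right _ _ (Ideal.mem_span_singleton_self f))

lemma hilbF_add {e : ℕ} (hI : IsHomogeneousIdeal I) {f : MvPolynomial (Fin (n + 1)) k}
    (hf : f.IsHomogeneous e) (hJ : ∀ g, g ∈ J ↔ f * g ∈ I) (m : ℕ) :
    hilbF k I (m + e) = hilbF k J m + hilbF k (I ⊔ Ideal.span {f}) (m + e) := by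
  simp only [hilbF_eq_gradedCodim]
  rw [gradedCodim_add hf m]
  congr 1
  · congr 1
    ext g
    simp [hJ]
  · exact le_antisymm
      (gradedCodim_anti fun g hg => (hI.mem_sup_span_singleton hf hg.1).mp hg.2)
      (gradedCodim_anti fun g hg => (hI.mem_sup_span_singleton hf hg.1).mpr hg.2)

lemma exists_hilbF_add_hilbF_le_hilbF_inf (hJ : IsHomogeneousIdeal J) (hP : IsHomogeneousIdeal P)
    [P.IsPrime] (hJP : ¬ J ≤ P) :
    ∃ b, ∀ m, hilbF k P m + hilbF k J (m + b) ≤ hilbF k (P ⊓ J) (m + b) := by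
  obtain ⟨g, hgJ, hgP⟩ := SetLike.not_le_iff_exists.mp hJP
  obtain ⟨b, hb⟩ := exists_homogeneousComponent_notMem hgP
  have colon_eq (x) : x ∈ P ↔ homogeneousComponent b g * x ∈ P ⊓ J :=
    ⟨fun hx => ⟨P.mul_mem_left _ hx, J.mul_mem_right _ (hJ g hgJ b)⟩,
      fun hx => (Ideal.IsPrime.mem_or_mem ‹P.IsPrime› hx.1).resolve_left hb⟩
  refine ⟨b, fun m => ?_⟩
  rw [hilbF_add (hP.inf hJ) (homogeneousComponent_isHomogeneous b g) colon_eq m]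
  have sup_le_J : P ⊓ J ⊔ Ideal.span {homogeneousComponent b g} ≤ J :=
    sup_le inf_le_right ((Ideal.span_singleton_le_iff_mem J).mpr (hJ g hgJ b))
  exact Nat.add_le_add_left (hilbF_anti sup_le_J _) _

lemma hilbF_finset_inf_le (s : Finset (Ideal (MvPolynomial (Fin (n + 1)) k))) (m : ℕ) :
    hilbF k (s.inf id) m ≤ ∑ P ∈ s, hilbF k P m := by
  classical
  induction s using Finset.induction_on with
  | empty => simp [hilbF_top]
  | insert P s hPs ih =>
    rw [Finset.inf_insert, id, Finset.sum_insert hPs]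
    exact (hilbF_inf_le _ _ _).trans (Nat.add_le_add_left ih _)

lemma exists_sum_le_hilbF_finset_inf {L : Ideal (MvPolynomial (Fin (n + 1)) k) → ℕ → ℕ}
    (hL : ∀ P, Monotone (L P)) (s : Finset (Ideal (MvPolynomial (Fin (n + 1)) k)))
    (hhom : ∀ P ∈ s, IsHomogeneousIdeal P) (hprime : ∀ P ∈ s, P.IsPrime)
    (hanti : IsAntichain (· ≤ ·) (s : Set (Ideal (MvPolynomial (Fin (n + 1)) k))))
    (hlow : ∀ P ∈ s, ∃ c, ∀ t, L P t ≤ hilbF k P (t + c)) :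
    ∃ b, ∀ c ≥ b, ∀ t, ∑ P ∈ s, L P t ≤ hilbF k (s.inf id) (t + c) := by
  classical
  induction s using Finset.induction_on with
  | empty => exact ⟨0, by simp⟩
  | insert P s hPs ih =>
    simp only [Finset.mem_insert, forall_eq_or_imp] at hhom hprime hlow
    obtain ⟨b, hb⟩ := ih hhom.2 hprime.2 (hanti.subset (by simp)) hlow.2
    obtain ⟨c, hc⟩ := hlow.1
    have := hprime.1
    have not_le : ¬ s.inf id ≤ P := by
      rw [Ideal.IsPrime.inf_le' hprime.1]
      rintro ⟨Q, hQ, hQP⟩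
      have hQP : Q = P := hanti.eq (by simp [hQ]) (by simp) hQP
      exact hPs (hQP ▸ hQ)
    obtain ⟨a, ha⟩ :=
      exists_hilbF_add_hilbF_le_hilbF_inf (.finset_inf hhom.2) hhom.1 not_le
    refine ⟨a + b + c, fun c' hc' t => ?_⟩
    obtain ⟨j, rfl⟩ := Nat.exists_eq_add_of_le hc'
    rw [Finset.inf_insert, id, Finset.sum_insert hPs]
    calc L P t + ∑ Q ∈ s, L Q t
        ≤ hilbF k P (t + b + j + c) + hilbF k (s.inf id) (t + b + j + c + a) := by
          gcongr
          · exact (hL P (by omega)).trans (hc (t + b + j))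
          · simpa only [add_assoc] using hb (b + (j + (c + a))) (by omega) t
      _ ≤ hilbF k (P ⊓ s.inf id) (t + b + j + c + a) := ha (t + b + j + c)
      _ = hilbF k (P ⊓ s.inf id) (t + (a + b + c + j)) := by
          congr 1
          omega

end HilbertFunction

/-! ### Binomial coefficients of a real argument -/

section AddChoose

/-- The binomial coefficient `C(x + s, s)` as a polynomial function of a real number `x`. -/
noncomputable def addChoose (s : ℕ) (x : ℝ) : ℝ := ∏ i ∈ Finset.range s, (x + i + 1) / (i + 1)

lemma addChoose_one (x : ℝ) : addChoose 1 x = x + 1 := by simp [addChoose]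

lemma addChoose_succ (s : ℕ) (x : ℝ) :
    addChoose (s + 1) x = addChoose s x * ((x + s + 1) / (s + 1)) :=
  Finset.prod_range_succ _ s

lemma addChoose_succ_sub_one (s : ℕ) (x : ℝ) :
    addChoose (s + 1) (x - 1) = addChoose s x * (x / (s + 1)) := by
  induction s with
  | zero => simp [addChoose]
  | succ s ih =>
    rw [addChoose_succ, ih, addChoose_succ s x]
    push_cast
    field_simp
    ring

lemma addChoose_pascal (s : ℕ) (x : ℝ) :
    addChoose (s + 1) x = addChoose (s + 1) (x - 1) + addChoose s x := by
  rw [addChoose_succ_sub_one, addChoose_succ]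
  field_simp
  ring

lemma addChoose_mul_add (s : ℕ) (x : ℝ) :
    addChoose s (x - 1) * (x + s) = addChoose s x * x := by
  cases s with
  | zero => simp [addChoose]
  | succ s =>
    rw [addChoose_succ_sub_one, addChoose_succ]
    push_cast
    field_simp
    ring

lemma addChoose_nonneg (s : ℕ) {x : ℝ} (hx : -1 ≤ x) : 0 ≤ addChoose s x :=
  Finset.prod_nonneg fun i _ => div_nonneg (by linarith [i.cast_nonneg (α := ℝ)]) (by positivity)

lemma addChoose_mono (s : ℕ) {x y : ℝ} (hx : -1 ≤ x) (hxy : x ≤ y) :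
    addChoose s x ≤ addChoose s y :=
  Finset.prod_le_prod
    (fun i _ => div_nonneg (by linarith [i.cast_nonneg (α := ℝ)]) (by positivity))
    (fun i _ => by gcongr)

lemma addChoose_succ_lt (s : ℕ) {x y : ℝ} (hx : 0 ≤ x) (hxy : x < y) :
    addChoose (s + 1) x < addChoose (s + 1) y :=
  Finset.prod_lt_prod_of_nonempty (fun i _ => by positivity) (fun i _ => by gcongr) (by simp)

lemma le_of_addChoose_succ_le {s : ℕ} {x y : ℝ} (hy : 0 ≤ y)
    (h : addChoose (s + 1) x ≤ addChoose (s + 1) y) : x ≤ y :=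
  le_of_not_gt fun hyx => (addChoose_succ_lt s hy hyx).not_ge h

lemma addChoose_natCast (s d : ℕ) : addChoose s d = ((s + d).choose d : ℝ) := by
  induction s with
  | zero => simp [addChoose]
  | succ s ih =>
    have h := Nat.add_one_mul_choose_eq (s + d) s
    rw [Nat.choose_symm_add, show s + d + 1 = s + 1 + d by omega, Nat.choose_symm_add] at h
    rw [addChoose_succ, ih]
    field_simp
    norm_cast
    linarith

lemma addChoose_zero (s : ℕ) : addChoose s 0 = 1 := by
  simpa using addChoose_natCast s 0

lemma le_addChoose_succ (s : ℕ) {x : ℝ} (hx : 0 ≤ x) : x ≤ addChoose (s + 1) x := by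
  induction s with
  | zero => simp [addChoose_one]
  | succ s ih =>
    have one_le : 1 ≤ (x + (s + 1 : ℕ) + 1) / ((s + 1 : ℕ) + 1) := by
      rw [le_div_iff₀ (by positivity)]
      linarith
    rw [addChoose_succ]
    exact ih.trans (le_mul_of_one_le_right (hx.trans ih) one_le)

lemma exists_addChoose_succ_eq (s : ℕ) {c : ℝ} (hc : 1 ≤ c) :
    ∃ x ≥ 0, addChoose (s + 1) x = c := by
  have cont : Continuous (addChoose (s + 1)) := by
    unfold addChoose
    fun_prop
  have hc0 : 0 ≤ c := zero_le_one.trans hc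
  obtain ⟨x, hx, hxc⟩ := intermediate_value_Icc hc0 cont.continuousOn
    ⟨(addChoose_zero (s + 1)).trans_le hc, le_addChoose_succ s hc0⟩
  exact ⟨x, hx.1, hxc⟩

lemma natCast_le_addChoose_sub_one {s c : ℕ} {x : ℝ} (hx : 0 ≤ x)
    (h : ∀ z ≥ 1, addChoose (s + 1) (z - 1) ≤ c → addChoose (s + 1) z ≤ addChoose (s + 1) x) :
    c ≤ addChoose (s + 1) (x - 1) := by
  rcases c.eq_zero_or_pos with rfl | hc
  · simpa using addChoose_nonneg (s + 1) (by linarith : -1 ≤ x - 1)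
  · obtain ⟨z, hz, hzc⟩ := exists_addChoose_succ_eq s (Nat.one_le_cast.mpr hc)
    have hzx : z + 1 ≤ x :=
      le_of_addChoose_succ_le hx (h (z + 1) (by linarith) (by simp [hzc]))
    rw [← hzc]
    exact addChoose_mono _ (by linarith) (by linarith)

end AddChoose

/-! ### Green's hyperplane restriction theorem -/

section ZariskiGeneric

variable {σ k : Type*} [Field k]

variable (σ k) in
/-- The filter of sets of coefficient vectors containing a nonempty Zariski open set, so that
`∀ᶠ a in zariskiGeneric σ k, Q a` says that `Q` holds for a generic vector `a`. -/
noncomputable def zariskiGeneric : Filter (σ → k) where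
  sets := {Q | ∃ p : MvPolynomial σ k, p ≠ 0 ∧ ∀ a, eval a p ≠ 0 → a ∈ Q}
  univ_sets := ⟨1, one_ne_zero, fun _ _ => Set.mem_univ _⟩
  sets_of_superset := fun ⟨p, hp, hpQ⟩ hQR => ⟨p, hp, fun a ha => hQR (hpQ a ha)⟩
  inter_sets := by
    rintro Q R ⟨p, hp, hpQ⟩ ⟨q, hq, hqR⟩
    refine ⟨p * q, mul_ne_zero hp hq, fun a ha => ?_⟩
    rw [map_mul, mul_ne_zero_iff] at ha
    exact ⟨hpQ a ha.1, hqR a ha.2⟩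

lemma mem_zariskiGeneric {Q : Set (σ → k)} :
    Q ∈ zariskiGeneric σ k ↔ ∃ p : MvPolynomial σ k, p ≠ 0 ∧ ∀ a, eval a p ≠ 0 → a ∈ Q :=
  Iff.rfl

instance neBot_zariskiGeneric [Infinite k] : (zariskiGeneric σ k).NeBot := by
  rw [Filter.neBot_iff, Ne, ← Filter.empty_mem_iff_bot, mem_zariskiGeneric]
  rintro ⟨p, hp, hvanish⟩
  exact hp (MvPolynomial.funext fun a => by simpa using hvanish a)

lemma eventually_isUnit_zariskiGeneric [Finite σ] {R : Type*} [AddCommGroup R] [Module k R]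
    [Module.Finite k R] (T : (σ → k) →ₗ[k] Module.End k R) {a₀ : σ → k} (ha₀ : IsUnit (T a₀)) :
    ∀ᶠ a in zariskiGeneric σ k, IsUnit (T a) := by
  classical
  have := Fintype.ofFinite σ
  have isUnit_iff (a : σ → k) :
      IsUnit (T a) ↔ eval a ((T.polyCharpoly (Pi.basisFun k σ)).coeff 0) ≠ 0 := by
    have := LinearMap.polyCharpoly_coeff_eval T (Pi.basisFun k σ) a 0
    rw [show ⇑((Pi.basisFun k σ).repr a) = a from rfl] at this
    rw [this, LinearMap.isUnit_iff_isUnit_det, isUnit_iff_ne_zero,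
      LinearMap.det_eq_sign_charpoly_coeff, mul_ne_zero_iff]
    simp
  refine mem_zariskiGeneric.mpr ⟨_, ?_, fun a => (isUnit_iff a).mpr⟩
  rintro h
  simpa [h] using (isUnit_iff a₀).mp ha₀

lemma eventually_finrank_map_le_zariskiGeneric [Finite σ] {E W : Type*} [AddCommGroup E]
    [Module k E] [AddCommGroup W] [Module k W] (Φ : (σ → k) →ₗ[k] E →ₗ[k] W) (U : Submodule k E)
    [Module.Finite k U] (a₀ : σ → k) :
    ∀ᶠ a in zariskiGeneric σ k,
      Module.finrank k (U.map (Φ a₀)) ≤ Module.finrank k (U.map (Φ a)) := by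
  obtain ⟨τ, hτ⟩ := LinearMap.exists_rightInverse_of_surjective ((Φ a₀).submoduleMap U)
    (LinearMap.range_eq_top.mpr ((Φ a₀).submoduleMap_surjective U))
  obtain ⟨π, hπ⟩ := LinearMap.exists_leftInverse_of_injective (U.map (Φ a₀)).subtype
    (Submodule.ker_subtype _)
  let T : (σ → k) →ₗ[k] Module.End k (U.map (Φ a₀)) := (Φ.compl₂ (U.subtype ∘ₗ τ)).compr₂ π
  have T_a₀ : T a₀ = 1 := by
    ext w
    have hw : Φ a₀ (τ w) = w := congrArg Subtype.val (LinearMap.congr_fun hτ w)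
    simpa [T, hw] using congrArg Subtype.val (LinearMap.congr_fun hπ w)
  filter_upwards [eventually_isUnit_zariskiGeneric T (T_a₀ ▸ isUnit_one)] with a ha
  have inj : Function.Injective (Φ a ∘ₗ U.subtype ∘ₗ τ) :=
    .of_comp (f := π) ((Module.End.isUnit_iff _).mp ha).1
  rw [← LinearMap.finrank_range_of_inj inj]
  refine Submodule.finrank_mono ?_
  rintro _ ⟨w, rfl⟩
  exact ⟨τ w, (τ w).2, rfl⟩

end ZariskiGeneric

section Green

variable {k σ : Type*} [Field k] [Fintype σ]

/-- The linear form with coefficient vector `a`. -/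
noncomputable def linearForm : (σ → k) →ₗ[k] MvPolynomial σ k := Fintype.linearCombination k X

lemma isHomogeneous_linearForm (a : σ → k) : (linearForm a).IsHomogeneous 1 := by
  rw [linearForm, Fintype.linearCombination_apply]
  refine IsHomogeneous.sum _ _ _ fun i _ => ?_
  rw [smul_eq_C_mul]
  exact isHomogeneous_C_mul_X _ _

/-- The section of a subspace `V` by the hyperplane with coefficient vector `a`, in degree
`s + 1`. -/
noncomputable def hyperplaneSection (s : ℕ) (V : Submodule k (MvPolynomial σ k)) (a : σ → k) :
    Submodule k (MvPolynomial σ k) :=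
  V ⊔ (homogeneousSubmodule σ k s).map (LinearMap.mulLeft k (linearForm a))

/-- The residual of a subspace `V` with respect to the hyperplane with coefficient vector `a`;
for an ideal this is the colon ideal by the linear form. -/
noncomputable def hyperplaneColon (V : Submodule k (MvPolynomial σ k)) (a : σ → k) :
    Submodule k (MvPolynomial σ k) :=
  V.comap (LinearMap.mulLeft k (linearForm a))

lemma gradedCodim_eq_colon_add_section (s : ℕ) (V : Submodule k (MvPolynomial σ k)) (a : σ → k) :
    gradedCodim (s + 1) V =
      gradedCodim s (hyperplaneColon V a) + gradedCodim (s + 1) (hyperplaneSection s V a) :=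
  gradedCodim_add (isHomogeneous_linearForm a) s V

lemma hyperplaneSection_comm (s : ℕ) (V : Submodule k (MvPolynomial σ k)) (a b : σ → k) :
    hyperplaneSection s (hyperplaneSection s V a) b =
      hyperplaneSection s (hyperplaneSection s V b) a := by
  simp only [hyperplaneSection, sup_right_comm]

lemma hyperplaneSection_colon_le (s : ℕ) (V : Submodule k (MvPolynomial σ k)) (a b : σ → k) :
    hyperplaneSection s (hyperplaneColon V b) a ≤
      hyperplaneColon (hyperplaneSection (s + 1) V a) b := by
  refine sup_le (Submodule.comap_mono le_sup_left) ?_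
  rintro _ ⟨g, hg, rfl⟩
  have mul_mem : linearForm b * g ∈ homogeneousSubmodule σ k (s + 1) := by
    rw [add_comm]
    exact (isHomogeneous_linearForm b).mul hg
  simp only [LinearMap.mulLeft_apply, hyperplaneColon, hyperplaneSection, Submodule.mem_comap]
  rw [mul_left_comm]
  exact Submodule.mem_sup_right (Submodule.mem_map_of_mem mul_mem)

lemma exists_gradedCodim_section_lt {s : ℕ} {V : Submodule k (MvPolynomial σ k)}
    (h : gradedCodim (s + 1) V ≠ 0) :
    ∃ a, gradedCodim (s + 1) (hyperplaneSection s V a) < gradedCodim (s + 1) V := by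
  classical
  contrapose! h
  refine gradedCodim_eq_zero_iff.mpr (homogeneousSubmodule_succ_le fun i g hg => ?_)
  have colon_eq_zero : gradedCodim s (hyperplaneColon V (Pi.single i 1)) = 0 := by
    have := gradedCodim_eq_colon_add_section s V (Pi.single i 1)
    have := h (Pi.single i 1)
    omega
  simpa [hyperplaneColon, linearForm] using gradedCodim_eq_zero_iff.mp colon_eq_zero hg

/-- The hyperplane with coefficient vector `a` cuts `V` in a section of minimal codimension in
degree `s + 1`, as a generic hyperplane does. -/
def IsMinimalSection (s : ℕ) (V : Submodule k (MvPolynomial σ k)) (a : σ → k) : Prop :=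
  ∀ b, gradedCodim (s + 1) (hyperplaneSection s V a) ≤
    gradedCodim (s + 1) (hyperplaneSection s V b)

lemma eventually_isMinimalSection (s : ℕ) (V : Submodule k (MvPolynomial σ k)) :
    ∀ᶠ a in zariskiGeneric σ k, IsMinimalSection s V a := by
  let Φ : (σ → k) →ₗ[k] MvPolynomial σ k →ₗ[k] MvPolynomial σ k ⧸ V :=
    (LinearMap.mul k (MvPolynomial σ k) ∘ₗ linearForm).compr₂ V.mkQ
  have finrank_Φ (a) : Module.finrank k ((homogeneousSubmodule σ k s).map (Φ a)) =
      gradedCodim s (hyperplaneColon V a) := by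
    rw [finrank_map_homogeneousSubmodule, hyperplaneColon,
      show Φ a = V.mkQ ∘ₗ LinearMap.mulLeft k (linearForm a) from rfl, LinearMap.ker_comp,
      Submodule.ker_mkQ]
  let codim := fun a => gradedCodim (s + 1) (hyperplaneSection s V a)
  filter_upwards [eventually_finrank_map_le_zariskiGeneric Φ (homogeneousSubmodule σ k s)
    (Function.argmin codim)] with a ha b
  refine le_trans ?_ (Function.argmin_le codim b)
  rw [finrank_Φ, finrank_Φ] at ha
  have := gradedCodim_eq_colon_add_section s V a
  have := gradedCodim_eq_colon_add_section s V (Function.argmin codim)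
  simp only [codim] at *
  omega

lemma exists_isMinimalSection_pair [Infinite k] (s : ℕ) (V : Submodule k (MvPolynomial σ k)) :
    ∃ a b, IsMinimalSection (s + 1) V a ∧ IsMinimalSection (s + 1) V b ∧
      IsMinimalSection (s + 1) (hyperplaneSection (s + 1) V a) b ∧
      IsMinimalSection s (hyperplaneColon V b) a := by
  let codim := fun p : (σ → k) × (σ → k) =>
    gradedCodim (s + 1 + 1) (hyperplaneSection (s + 1) (hyperplaneSection (s + 1) V p.1) p.2)
  let p := Function.argmin codim
  obtain ⟨b, hb, hpb⟩ := ((eventually_isMinimalSection (s + 1) V).and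
    (eventually_isMinimalSection (s + 1) (hyperplaneSection (s + 1) V p.1))).exists
  obtain ⟨a, ha, hba, hcolon⟩ := ((eventually_isMinimalSection (s + 1) V).and
    ((eventually_isMinimalSection (s + 1) (hyperplaneSection (s + 1) V b)).and
    (eventually_isMinimalSection s (hyperplaneColon V b)))).exists
  refine ⟨a, b, ha, hb, fun b' => ?_, hcolon⟩
  calc codim (a, b) = codim (b, a) := by simp only [codim, hyperplaneSection_comm]
    _ ≤ codim (b, p.1) := hba p.1
    _ = codim (p.1, b) := by simp only [codim, hyperplaneSection_comm]
    _ ≤ codim p := hpb p.2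
    _ ≤ codim (a, b') := Function.argmin_le codim (a, b')

/-- Green's bound for `V` in degree `s + 1`, with the binomial expansion of the codimension of a
hyperplane section replaced by Lovász' real parameter `y`. -/
def GreenBound (s : ℕ) (V : Submodule k (MvPolynomial σ k)) : Prop :=
  ∀ y ≥ 1, (∀ a, addChoose (s + 1) (y - 1) ≤ gradedCodim (s + 1) (hyperplaneSection s V a)) →
    addChoose (s + 1) y ≤ gradedCodim (s + 1) V

lemma exists_section_lt_of_addChoose_le {s : ℕ} {V : Submodule k (MvPolynomial σ k)} {y : ℝ}
    (hy : 1 ≤ y)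
    (h : ∀ a, addChoose (s + 1) (y - 1) ≤ gradedCodim (s + 1) (hyperplaneSection s V a)) :
    (∀ a, (1 : ℝ) ≤ gradedCodim (s + 1) (hyperplaneSection s V a)) ∧
      ∃ a, gradedCodim (s + 1) (hyperplaneSection s V a) < gradedCodim (s + 1) V := by
  have one_le (a) : (1 : ℝ) ≤ gradedCodim (s + 1) (hyperplaneSection s V a) :=
    calc (1 : ℝ) = addChoose (s + 1) 0 := (addChoose_zero _).symm
      _ ≤ addChoose (s + 1) (y - 1) := addChoose_mono _ (by norm_num) (by linarith)
      _ ≤ _ := h a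
  refine ⟨one_le, exists_gradedCodim_section_lt ?_⟩
  have := Nat.one_le_cast.mp (one_le 0)
  have := gradedCodim_eq_colon_add_section s V 0
  omega

lemma greenBound_zero (V : Submodule k (MvPolynomial σ k)) : GreenBound 0 V := by
  intro y hy h
  obtain ⟨-, a, ha⟩ := exists_section_lt_of_addChoose_le hy h
  have hya := h a
  simp only [zero_add, addChoose_one] at hya ha ⊢
  have : (gradedCodim 1 (hyperplaneSection 0 V a) : ℝ) + 1 ≤ gradedCodim 1 V := mod_cast ha
  linarith

lemma greenBound_succ [Infinite k] {s : ℕ} {V : Submodule k (MvPolynomial σ k)}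
    (lower_degree : ∀ W : Submodule k (MvPolynomial σ k), GreenBound s W)
    (smaller_codim : ∀ W : Submodule k (MvPolynomial σ k),
      gradedCodim (s + 1 + 1) W < gradedCodim (s + 1 + 1) V → GreenBound (s + 1) W) :
    GreenBound (s + 1) V := by
  intro y hy h
  obtain ⟨one_le, a', ha'⟩ := exists_section_lt_of_addChoose_le hy h
  obtain ⟨a, b, ha, hb, hab, hcolon⟩ := exists_isMinimalSection_pair s V
  set Va := hyperplaneSection (s + 1) V a
  obtain ⟨x, hx, hxa⟩ := exists_addChoose_succ_eq (s + 1) (one_le a)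
  have hyx : y - 1 ≤ x := le_of_addChoose_succ_le hx (hxa ▸ h a)
  have section_section_le :
      (gradedCodim (s + 1 + 1) (hyperplaneSection (s + 1) Va b) : ℝ) ≤
        addChoose (s + 1 + 1) (x - 1) := by
    refine natCast_le_addChoose_sub_one hx fun z hz hzb => ?_
    rw [hxa]
    exact smaller_codim Va ((ha a').trans_lt ha') z hz fun b' =>
      hzb.trans (Nat.cast_le.mpr (hab b'))
  have le_colon_section (a'') : addChoose (s + 1) x ≤
      gradedCodim (s + 1) (hyperplaneSection s (hyperplaneColon V b) a'') := by
    have section_a : (gradedCodim (s + 1 + 1) Va : ℝ) = gradedCodim (s + 1) (hyperplaneColon Va b) +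
        gradedCodim (s + 1 + 1) (hyperplaneSection (s + 1) Va b) :=
      mod_cast gradedCodim_eq_colon_add_section (s + 1) Va b
    have colon_le : (gradedCodim (s + 1) (hyperplaneColon Va b) : ℝ) ≤
        gradedCodim (s + 1) (hyperplaneSection s (hyperplaneColon V b) a'') :=
      mod_cast (gradedCodim_anti (inf_le_right.trans (hyperplaneSection_colon_le s V a b))).trans
        (hcolon a'')
    linarith [addChoose_pascal (s + 1) x]
  have colon_bound : addChoose (s + 1) (x + 1) ≤ gradedCodim (s + 1) (hyperplaneColon V b) :=
    lower_degree _ (x + 1) (by linarith) (by simpa using le_colon_section)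
  have section_b : (gradedCodim (s + 1 + 1) V : ℝ) =
      gradedCodim (s + 1) (hyperplaneColon V b) + gradedCodim (s + 1 + 1) Va := by
    rw [le_antisymm (ha b) (hb a)]
    exact mod_cast gradedCodim_eq_colon_add_section (s + 1) V b
  calc addChoose (s + 1 + 1) y ≤ addChoose (s + 1 + 1) (x + 1) :=
        addChoose_mono _ (by linarith) (by linarith)
    _ = addChoose (s + 1 + 1) x + addChoose (s + 1) (x + 1) := by
        simpa using addChoose_pascal (s + 1) (x + 1)
    _ ≤ gradedCodim (s + 1 + 1) V := by linarith

theorem greenBound [Infinite k] (s : ℕ) (V : Submodule k (MvPolynomial σ k)) : GreenBound s V := by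
  induction s generalizing V with
  | zero => exact greenBound_zero V
  | succ s ih =>
    induction hc : gradedCodim (s + 1 + 1) V using Nat.strong_induction_on generalizing V with
    | _ c smaller => exact greenBound_succ ih fun W hW => smaller _ (hc ▸ hW) W rfl

theorem hilbF_green_of_infinite [Infinite k] {n : ℕ} (I : Ideal (MvPolynomial (Fin (n + 1)) k))
    {t : ℕ} {y : ℝ} (hy : 1 ≤ y)
    (h : addChoose (t + 1) (y - 1) ≤ (hilbF k I (t + 1) : ℝ) - hilbF k I t) :
    addChoose (t + 1) y ≤ hilbF k I (t + 1) := by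
  simp only [hilbF_eq_gradedCodim] at h ⊢
  refine greenBound t _ y hy fun a => h.trans ?_
  have colon_le : gradedCodim t (hyperplaneColon (I.restrictScalars k) a) ≤
      gradedCodim t (I.restrictScalars k) :=
    gradedCodim_anti (inf_le_right.trans fun f hf => I.mul_mem_left _ hf)
  rw [sub_le_iff_le_add', gradedCodim_eq_colon_add_section t _ a]
  exact_mod_cast Nat.add_le_add_right colon_le _

end Green

/-! ### Extension of the base field -/

section BaseChange

variable {k A σ : Type*} [Field k] [CommRing A] [Algebra k A]

/-- Applying a `k`-linear functional on a `k`-algebra `A` to every coefficient of a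
polynomial. -/
noncomputable def mapCoeff (l : Module.Dual k A) : MvPolynomial σ A →+ MvPolynomial σ k where
  toFun F := AddMonoidAlgebra.map (l : A →+ k) F
  map_zero' := AddMonoidAlgebra.map_zero _
  map_add' := AddMonoidAlgebra.map_add _

@[simp]
lemma coeff_mapCoeff (l : Module.Dual k A) (F : MvPolynomial σ A) (d : σ →₀ ℕ) :
    coeff d (mapCoeff l F) = l (coeff d F) := rfl

lemma mapCoeff_mul_map (l : Module.Dual k A) (F : MvPolynomial σ A) (g : MvPolynomial σ k) :
    mapCoeff l (F * map (algebraMap k A) g) = mapCoeff l F * g := by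
  classical
  ext d
  rw [coeff_mapCoeff, coeff_mul, coeff_mul, map_sum]
  refine Finset.sum_congr rfl fun x _ => ?_
  rw [coeff_map, coeff_mapCoeff, mul_comm, ← Algebra.smul_def, map_smul, smul_eq_mul, mul_comm]

lemma mapCoeff_C (l : Module.Dual k A) (c : A) :
    mapCoeff l (C c : MvPolynomial σ A) = C (l c) := by
  classical
  ext d
  rw [coeff_mapCoeff, coeff_C, coeff_C, apply_ite l, map_zero]

lemma mapCoeff_mem {I : Ideal (MvPolynomial σ k)} (l : Module.Dual k A) {F : MvPolynomial σ A}
    (hF : F ∈ I.map (map (algebraMap k A))) : mapCoeff l F ∈ I := by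
  induction hF using Submodule.closure_induction with
  | zero => simp
  | add F G _ _ hF hG => simpa using I.add_mem hF hG
  | smul_mem F G hG =>
    obtain ⟨g, hg, rfl⟩ := hG
    rw [smul_eq_mul, mapCoeff_mul_map]
    exact I.mul_mem_left _ hg

lemma sum_smul_mkₐ_eq_zero_iff {I : Ideal (MvPolynomial σ A)} {ι : Type*} {s : Finset ι}
    {c : ι → A} {b : ι → MvPolynomial σ A} :
    ∑ i ∈ s, c i • Ideal.Quotient.mkₐ A I (b i) = 0 ↔ ∑ i ∈ s, C (c i) * b i ∈ I := by
  rw [← Ideal.Quotient.eq_zero_iff_mem, ← Ideal.Quotient.mkₐ_eq_mk A, map_sum]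
  simp only [← smul_eq_C_mul, map_smul]

lemma linearIndependent_mk_map {I : Ideal (MvPolynomial σ k)} {ι : Type*}
    {b : ι → MvPolynomial σ k} (hb : LinearIndependent k (Ideal.Quotient.mkₐ k I ∘ b)) :
    LinearIndependent A (Ideal.Quotient.mkₐ A (I.map (map (algebraMap k A))) ∘
      map (algebraMap k A) ∘ b) := by
  rw [linearIndependent_iff'] at hb ⊢
  intro s c hc i hi
  refine (Module.forall_dual_apply_eq_zero_iff k _).mp fun l => hb s (l ∘ c) ?_ i hi
  simp only [Function.comp_apply, sum_smul_mkₐ_eq_zero_iff] at hc ⊢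
  simpa only [map_sum, mapCoeff_mul_map, mapCoeff_C] using mapCoeff_mem l hc

variable (k A σ) in
lemma homogeneousSubmodule_le_span_map (m : ℕ) :
    homogeneousSubmodule σ A m ≤
      Submodule.span A (map (algebraMap k A) '' homogeneousSubmodule σ k m) := by
  intro F hF
  rw [F.as_sum]
  refine Submodule.sum_mem _ fun d hd => ?_
  rw [← mul_one (coeff d F), ← smul_eq_mul, ← smul_monomial]
  refine Submodule.smul_mem _ _ (Submodule.subset_span ⟨monomial d 1, ?_, by simp⟩)
  exact isHomogeneous_monomial _
    (Finsupp.degree_eq_weight_one (R := ℕ) ▸ hF (mem_support_iff.mp hd))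

lemma hilbF_map_algebraMap (k' : Type*) [Field k'] [Algebra k k'] {n : ℕ}
    (I : Ideal (MvPolynomial (Fin (n + 1)) k)) (m : ℕ) :
    hilbF k' (I.map (map (algebraMap k k'))) m = hilbF k I m := by
  set I' := I.map (map (algebraMap k k'))
  let H := homogeneousSubmodule (Fin (n + 1)) k m
  let ψ : (MvPolynomial (Fin (n + 1)) k ⧸ I) →ₐ[k] (MvPolynomial (Fin (n + 1)) k' ⧸ I') :=
    Ideal.quotientMapₐ I' (mapAlgHom (Algebra.ofId k k')) Ideal.le_comap_map
  obtain ⟨κ, b, -, span_b, indep_v⟩ :=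
    exists_linearIndependent' k (fun g : H => Ideal.Quotient.mkₐ k I g)
  set v : κ → MvPolynomial (Fin (n + 1)) k ⧸ I := (fun g : H => Ideal.Quotient.mkₐ k I g) ∘ b
  have span_v : Submodule.span k (Set.range v) = H.map (Ideal.Quotient.mkₐ k I).toLinearMap := by
    have range_eq : Set.range (fun g : H => Ideal.Quotient.mkₐ k I g) =
        (Ideal.Quotient.mkₐ k I).toLinearMap '' H := (Set.image_eq_range _ _).symm
    rw [span_b, range_eq, Submodule.span_image, Submodule.span_eq]
  have span_ψv : Submodule.span k' (Set.range (ψ ∘ v)) =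
      (homogeneousSubmodule _ k' m).map (Ideal.Quotient.mkₐ k' I').toLinearMap := by
    refine le_antisymm (Submodule.span_le.mpr ?_) ?_
    · rintro _ ⟨i, rfl⟩
      exact ⟨_, IsHomogeneous.map (b i).2 _, rfl⟩
    · refine (Submodule.map_mono (homogeneousSubmodule_le_span_map k k' _ m)).trans ?_
      rw [Submodule.map_span, Submodule.span_le, Set.image_image]
      rintro _ ⟨g, hg, rfl⟩
      have mem_span_v : Ideal.Quotient.mkₐ k I g ∈ Submodule.span k (Set.range v) :=
        span_v ▸ Submodule.mem_map_of_mem hg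
      have := Submodule.mem_map_of_mem (f := ψ.toLinearMap) mem_span_v
      rw [Submodule.map_span, ← Set.range_comp] at this
      exact Submodule.span_le_restrictScalars k k' _ this
  have indep_ψv : LinearIndependent k' (ψ ∘ v) := linearIndependent_mk_map indep_v
  rw [hilbF, hilbF, ← span_v, ← span_ψv, Module.finrank_eq_nat_card_basis (.span indep_v),
    Module.finrank_eq_nat_card_basis (.span indep_ψv)]

lemma isPrime_map_C {R : Type*} [CommRing R] {P : Ideal R} (hP : P.IsPrime) :
    (P.map (C : R →+* MvPolynomial σ R)).IsPrime := by
  rw [← P.mk_ker, ← ker_map]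
  exact RingHom.ker_isPrime _

lemma isPrime_map_map_C {τ R : Type*} [CommRing R] {P : Ideal (MvPolynomial σ R)}
    (hP : P.IsPrime) : (P.map (map (C : R →+* MvPolynomial τ R))).IsPrime := by
  have := isPrime_map_C (σ := τ) hP
  have prime_swap := Ideal.map_isPrime_of_equiv (commAlgEquiv R τ σ) (I := P.map C)
  have swap_C : (RingHomClass.toRingHom (commAlgEquiv R τ σ)).comp C = map C :=
    RingHom.ext fun p => by simp
  rwa [← Ideal.map_coe, Ideal.map_map, swap_C] at prime_swap

lemma isPrime_map_fractionRing {P : Ideal (MvPolynomial σ k)} (hP : P.IsPrime) :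
    (P.map (map (algebraMap k (FractionRing (MvPolynomial Unit k))))).IsPrime := by
  set A := MvPolynomial Unit k
  have prime_A : (P.map (map (algebraMap k A))).IsPrime := isPrime_map_map_C hP
  have disjoint : Disjoint ((nonZeroDivisors A).map (C : A →+* MvPolynomial σ A) : Set _)
      (P.map (map (algebraMap k A)) : Set (MvPolynomial σ A)) := by
    rw [Set.disjoint_left]
    rintro _ ⟨s, hs, rfl⟩ hsP
    refine nonZeroDivisors.ne_zero hs ((Module.forall_dual_apply_eq_zero_iff k s).mp fun l => ?_)
    have C_mem : C (l s) ∈ P := mapCoeff_C l s ▸ mapCoeff_mem l hsP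
    by_contra hls
    exact hP.ne_top (P.eq_top_of_isUnit_mem C_mem ((isUnit_iff_ne_zero.mpr hls).map C))
  have map_comp_map : (map (algebraMap A (FractionRing A))).comp (map (algebraMap k A)) =
      map (σ := σ) (algebraMap k (FractionRing A)) := by
    refine RingHom.ext fun p => ?_
    rw [IsScalarTower.algebraMap_eq k A (FractionRing A), ← map_map]
    rfl
  let : Algebra (MvPolynomial σ A) (MvPolynomial σ (FractionRing A)) := algebraMvPolynomial
  rw [← map_comp_map, ← Ideal.map_map]
  exact IsLocalization.isPrime_of_isPrime_disjoint ((nonZeroDivisors A).map C) _ _ prime_A disjoint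

instance infinite_fractionRing_mvPolynomial : Infinite (FractionRing (MvPolynomial Unit k)) :=
  .of_injective _ (IsFractionRing.injective (MvPolynomial Unit k) _)

theorem hilbF_green {n : ℕ} (I : Ideal (MvPolynomial (Fin (n + 1)) k)) {t : ℕ} {y : ℝ}
    (hy : 1 ≤ y) (h : addChoose (t + 1) (y - 1) ≤ (hilbF k I (t + 1) : ℝ) - hilbF k I t) :
    addChoose (t + 1) y ≤ hilbF k I (t + 1) := by
  have green := hilbF_green_of_infinite
    (I.map (map (algebraMap k (FractionRing (MvPolynomial Unit k))))) (t := t) hy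
  simp only [hilbF_map_algebraMap] at green
  exact green h

end BaseChange

/-! ### Linear Noether normalization -/

section Reduction

variable {k K : Type*} [Field k] [CommRing K] [Algebra k K]

/-- `W` is a reduction of `V` in the sense of Northcott and Rees. For the subspaces `oneSpan`
below this is integrality of `V` over `W`, with a control of the degrees of the coefficients. -/
def IsReduction (W V : Submodule k K) : Prop :=
  W ≤ V ∧ ∃ q, V ^ (q + 1) ≤ W * V ^ q

lemma isReduction_refl (V : Submodule k K) : IsReduction V V :=
  ⟨le_rfl, 0, by rw [pow_succ']⟩

lemma pow_add_le_pow_mul_pow {W V : Submodule k K} {q : ℕ} (hq : V ^ (q + 1) ≤ W * V ^ q) (j : ℕ) :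
    V ^ (j + q) ≤ W ^ j * V ^ q := by
  induction j with
  | zero => simp
  | succ j ih =>
    calc V ^ (j + 1 + q) = V * V ^ (j + q) := by rw [add_right_comm, pow_succ']
      _ ≤ V * (W ^ j * V ^ q) := by gcongr
      _ = W ^ j * V ^ (q + 1) := by ring
      _ ≤ W ^ j * (W * V ^ q) := by gcongr
      _ = W ^ (j + 1) * V ^ q := by ring

lemma IsReduction.trans {U W V : Submodule k K} (hUW : IsReduction U W) (hWV : IsReduction W V) :
    IsReduction U V := by
  obtain ⟨U_le, p, hp⟩ := hUW
  obtain ⟨W_le, q, hq⟩ := hWV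
  refine ⟨U_le.trans W_le, p + q, ?_⟩
  calc V ^ (p + q + 1) = V ^ (p + 1 + q) := by rw [add_right_comm]
    _ ≤ W ^ (p + 1) * V ^ q := pow_add_le_pow_mul_pow hq _
    _ ≤ U * W ^ p * V ^ q := by gcongr
    _ ≤ U * V ^ p * V ^ q := by gcongr
    _ = U * V ^ (p + q) := by ring

lemma isReduction_of_pow_mem {W V : Submodule k K} {z : K} {q : ℕ} (hWV : W ≤ V) (hz : z ∈ V)
    (hV : V ≤ W ⊔ Submodule.span k {z}) (hpow : z ^ (q + 1) ∈ W * V ^ q) : IsReduction W V := by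
  have pow_le : ∀ j, V ^ (j + 1) ≤ W * V ^ j ⊔ Submodule.span k {z ^ (j + 1)} := by
    intro j
    induction j with
    | zero => simpa using hV
    | succ j ih =>
      have mul_pow_le : Submodule.span k {z} * V ^ (j + 1) ≤
          W * V ^ (j + 1) ⊔ Submodule.span k {z ^ (j + 1 + 1)} := by
        calc Submodule.span k {z} * V ^ (j + 1)
            ≤ Submodule.span k {z} * (W * V ^ j ⊔ Submodule.span k {z ^ (j + 1)}) := by gcongr
          _ = W * (Submodule.span k {z} * V ^ j) ⊔ Submodule.span k {z ^ (j + 1 + 1)} := by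
            rw [Submodule.mul_sup, mul_left_comm, Submodule.span_mul_span,
              Set.singleton_mul_singleton, ← pow_succ']
          _ ≤ W * V ^ (j + 1) ⊔ Submodule.span k {z ^ (j + 1 + 1)} := by
            rw [pow_succ' V]
            gcongr
            simpa using hz
      calc V ^ (j + 1 + 1) = V * V ^ (j + 1) := pow_succ' _ _
        _ ≤ (W ⊔ Submodule.span k {z}) * V ^ (j + 1) := by gcongr
        _ = W * V ^ (j + 1) ⊔ Submodule.span k {z} * V ^ (j + 1) := Submodule.sup_mul ..
        _ ≤ _ := sup_le le_sup_left mul_pow_le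
  exact ⟨hWV, q, (pow_le q).trans (sup_le le_rfl (by simpa using hpow))⟩

variable (k) in
/-- The space of values at `x` of the polynomials of degree at most one. -/
def oneSpan {ι : Type*} (x : ι → K) : Submodule k K := 1 ⊔ Submodule.span k (Set.range x)

lemma one_mem_oneSpan {ι : Type*} (x : ι → K) : 1 ∈ oneSpan k x :=
  le_sup_left (a := (1 : Submodule k K)) (Submodule.one_le.mp le_rfl)

lemma mem_oneSpan {ι : Type*} (x : ι → K) (i : ι) : x i ∈ oneSpan k x :=
  le_sup_right (a := (1 : Submodule k K)) (Submodule.subset_span ⟨i, rfl⟩)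

lemma oneSpan_le_iff {ι : Type*} {x : ι → K} {V : Submodule k K} :
    oneSpan k x ≤ V ↔ 1 ∈ V ∧ ∀ i, x i ∈ V := by
  rw [oneSpan, sup_le_iff, Submodule.one_le, Submodule.span_le, Set.range_subset_iff]
  rfl

lemma aeval_mem_pow_of_isHomogeneous {σ : Type*} {V : Submodule k K} {x : σ → K}
    (hx : ∀ i, x i ∈ V) {g : MvPolynomial σ k} {s : ℕ} (hg : g.IsHomogeneous s) :
    aeval x g ∈ V ^ s := by
  have map_le : (homogeneousSubmodule σ k 1).map (aeval x).toLinearMap ≤ V := by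
    rw [homogeneousSubmodule_one_eq_span_X, Submodule.map_span, Submodule.span_le]
    rintro _ ⟨_, ⟨i, rfl⟩, rfl⟩
    simpa using hx i
  have mem : aeval x g ∈ (homogeneousSubmodule σ k s).map (aeval x).toLinearMap := ⟨g, hg, rfl⟩
  rw [← homogeneousSubmodule_one_pow, Submodule.map_pow] at mem
  exact pow_le_pow_left' map_le s mem

lemma aeval_mem_pow {σ : Type*} {V : Submodule k K} {x : σ → K} (h1 : 1 ∈ V) (hx : ∀ i, x i ∈ V)
    {g : MvPolynomial σ k} {s : ℕ} (hg : g.totalDegree ≤ s) : aeval x g ∈ V ^ s := by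
  rw [← sum_homogeneousComponent g, map_sum]
  refine Submodule.sum_mem _ fun i hi => ?_
  have i_le : i ≤ s := (Finset.mem_range_succ_iff.mp hi).trans hg
  exact pow_le_pow_right₀ (Submodule.one_le.mpr h1) i_le
    (aeval_mem_pow_of_isHomogeneous hx (homogeneousComponent_isHomogeneous i g))

lemma mul_smul_aeval_sub_smul_pow_mem {σ : Type*} {W V : Submodule k K} {x : σ → K} {c : k} {z : K}
    {l : σ → k} (hx : ∀ i, x i ∈ V) (hz : z ∈ V) (hW : ∀ i, c • x i - l i • z ∈ W)
    {s : ℕ} {g : MvPolynomial σ k} (hg : g.IsHomogeneous s) :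
    z * (c ^ s • aeval x g - eval l g • z ^ s) ∈ W * V ^ s := by
  let defect (s : ℕ) : MvPolynomial σ k →ₗ[k] K := LinearMap.mulLeft k z ∘ₗ
    (c ^ s • (aeval x).toLinearMap - (aeval l).toLinearMap.smulRight (z ^ s))
  suffices homogeneousSubmodule σ k s ≤ (W * V ^ s).comap (defect s) from this hg
  clear hg g
  induction s with
  | zero =>
    rw [homogeneousSubmodule_zero, Submodule.one_le]
    simp [defect]
  | succ s ih =>
    refine homogeneousSubmodule_succ_le fun i g hg => ?_
    have split : defect (s + 1) (X i * g) = (c • x i - l i • z) * (z * c ^ s • aeval x g) +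
        l i • (z * defect s g) := by
      simp only [defect, LinearMap.comp_apply, LinearMap.sub_apply, LinearMap.smul_apply,
        LinearMap.smulRight_apply, LinearMap.mulLeft_apply, AlgHom.toLinearMap_apply, map_mul,
        aeval_X, Algebra.smul_def, map_pow]
      ring
    have first_mem : z * c ^ s • aeval x g ∈ V ^ (s + 1) := by
      rw [pow_succ']
      exact Submodule.mul_mem_mul hz
        (Submodule.smul_mem _ _ (aeval_mem_pow_of_isHomogeneous hx hg))
    have second_mem : z * defect s g ∈ W * V ^ (s + 1) := by
      rw [pow_succ', mul_left_comm]
      exact Submodule.mul_mem_mul hz (ih hg)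
    rw [Submodule.mem_comap, split]
    exact Submodule.add_mem _ (Submodule.mul_mem_mul (hW i) first_mem)
      (Submodule.smul_mem _ _ second_mem)

lemma homogeneousComponent_totalDegree_ne_zero {σ : Type*} {G : MvPolynomial σ k} (hG : G ≠ 0) :
    homogeneousComponent G.totalDegree G ≠ 0 := by
  obtain ⟨d, hd, deg_eq⟩ := Finset.exists_mem_eq_sup G.support (support_nonempty.mpr hG)
    fun s => s.sum fun _ e => e
  intro h
  have coeff_eq := coeff_homogeneousComponent G.totalDegree G d
  rw [h, coeff_zero, if_pos (by rw [totalDegree, deg_eq]; rfl)] at coeff_eq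
  exact mem_support_iff.mp hd coeff_eq.symm

lemma mul_aeval_homogeneousComponent_totalDegree_mem {σ : Type*} {V : Submodule k K} {x : σ → K}
    {z : K} (h1 : 1 ∈ V) (hx : ∀ i, x i ∈ V) (hz : z ∈ V) {G : MvPolynomial σ k}
    (hG : aeval x G = 0) :
    z * aeval x (homogeneousComponent G.totalDegree G) ∈ V ^ G.totalDegree := by
  rw [← sum_homogeneousComponent G, Finset.sum_range_succ, map_add, add_comm] at hG
  rw [eq_neg_of_add_eq_zero_left hG, mul_neg, map_sum, Finset.mul_sum]
  refine Submodule.neg_mem _ (Submodule.sum_mem _ fun i hi => ?_)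
  refine pow_le_pow_right₀ (Submodule.one_le.mpr h1) (Finset.mem_range.mp hi) ?_
  rw [pow_succ']
  exact Submodule.mul_mem_mul hz
    (aeval_mem_pow_of_isHomogeneous hx (homogeneousComponent_isHomogeneous i G))

theorem exists_isReduction_of_aeval_eq_zero [Infinite k] {n : ℕ} {x : Fin (n + 1) → K}
    {G : MvPolynomial (Fin (n + 1)) k} (hG : G ≠ 0) (hx : aeval x G = 0) :
    ∃ y : Fin n → K, IsReduction (oneSpan k y) (oneSpan k x) := by
  set N := G.totalDegree
  obtain ⟨l, hl⟩ : ∃ l, eval l (X 0 * homogeneousComponent N G) ≠ 0 := by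
    by_contra! h
    exact mul_ne_zero (X_ne_zero 0) (homogeneousComponent_totalDegree_ne_zero hG)
      (funext fun l => by simpa using h l)
  rw [map_mul, eval_X, mul_ne_zero_iff] at hl
  obtain ⟨hl0, hlG⟩ := hl
  let y : Fin n → K := fun i => l 0 • x i.succ - l i.succ • x 0
  have y_le : oneSpan k y ≤ oneSpan k x := oneSpan_le_iff.mpr ⟨one_mem_oneSpan x, fun i =>
    sub_mem (Submodule.smul_mem _ _ (mem_oneSpan x _)) (Submodule.smul_mem _ _ (mem_oneSpan x _))⟩
  have sub_mem_y : ∀ i, l 0 • x i - l i • x 0 ∈ oneSpan k y :=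
    Fin.cases (by simp) fun i => mem_oneSpan y i
  have le_sup : oneSpan k x ≤ oneSpan k y ⊔ Submodule.span k {x 0} := by
    refine oneSpan_le_iff.mpr ⟨le_sup_left (a := oneSpan k y) (one_mem_oneSpan y), fun i => ?_⟩
    rw [← Submodule.smul_mem_iff _ hl0, ← sub_add_cancel (l 0 • x i) (l i • x 0)]
    exact Submodule.add_mem_sup (sub_mem_y i)
      (Submodule.smul_mem _ _ (Submodule.mem_span_singleton_self _))
  refine ⟨y, isReduction_of_pow_mem y_le (mem_oneSpan x 0) le_sup (q := N) ?_⟩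
  have lower_terms : x 0 * aeval x (homogeneousComponent N G) ∈
      oneSpan k y * oneSpan k x ^ N :=
    le_mul_of_one_le_left' (Submodule.one_le.mpr (one_mem_oneSpan y))
      (mul_aeval_homogeneousComponent_totalDegree_mem (one_mem_oneSpan x) (mem_oneSpan x)
        (mem_oneSpan x 0) hx)
  have leading_term := mul_smul_aeval_sub_smul_pow_mem (mem_oneSpan x) (mem_oneSpan x 0) sub_mem_y
    (homogeneousComponent_isHomogeneous N G)
  rw [mul_sub, mul_smul_comm, mul_smul_comm, ← pow_succ', Submodule.sub_mem_iff_right _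
    (Submodule.smul_mem _ _ lower_terms), Submodule.smul_mem_iff _ hlG] at leading_term
  exact leading_term

theorem exists_algebraicIndependent_isReduction [Infinite k] [Nontrivial K] {n : ℕ}
    (x : Fin n → K) :
    ∃ r, ∃ y : Fin r → K, AlgebraicIndependent k y ∧ IsReduction (oneSpan k y) (oneSpan k x) := by
  induction n with
  | zero =>
    exact ⟨0, x, algebraicIndependent_empty_type_iff.mpr (algebraMap k K).injective,
      isReduction_refl _⟩
  | succ n ih =>
    by_cases hx : AlgebraicIndependent k x
    · exact ⟨_, x, hx, isReduction_refl _⟩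
    · obtain ⟨G, hGx, hG⟩ : ∃ G : MvPolynomial (Fin (n + 1)) k, aeval x G = 0 ∧ G ≠ 0 := by
        simpa [algebraicIndependent_iff] using hx
      obtain ⟨x', hx'⟩ := exists_isReduction_of_aeval_eq_zero hG hGx
      obtain ⟨r, y, hy, hred⟩ := ih x'
      exact ⟨r, y, hy, hred.trans hx'⟩

end Reduction

/-! ### Order of vanishing at a point -/

section VanishingOrder

variable {σ k : Type*} [Field k]

lemma restrictTotalDegree_pow_le (N m : ℕ) :
    restrictTotalDegree σ k N ^ m ≤ restrictTotalDegree σ k (N * m) := by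
  induction m with
  | zero =>
    rw [pow_zero, Submodule.one_le, mem_restrictTotalDegree, totalDegree_one]
    exact Nat.zero_le _
  | succ m ih =>
    rw [pow_succ, Nat.mul_succ]
    refine (mul_le_mul_left ih _).trans (Submodule.mul_le.mpr fun f hf g hg => ?_)
    rw [mem_restrictTotalDegree] at hf hg ⊢
    exact (totalDegree_mul f g).trans (add_le_add hf hg)

lemma finrank_restrictTotalDegree (r m : ℕ) :
    Module.finrank k (restrictTotalDegree (Fin r) k m) = (m + r).choose r := by
  have exponents : {d : Fin r →₀ ℕ | (d.sum fun _ e => e) ≤ m} =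
      ((Finset.range (m + 1)).biUnion Finset.univ.finsuppAntidiag : Finset (Fin r →₀ ℕ)) := by
    ext d
    simp [Finset.mem_finsuppAntidiag, Finsupp.sum_fintype]
  have disjoint : (Finset.range (m + 1) : Set ℕ).PairwiseDisjoint
      (Finset.univ : Finset (Fin r)).finsuppAntidiag := by
    intro i _ j _ hij
    refine Finset.disjoint_left.mpr fun d hi hj => hij ?_
    rw [Finset.mem_finsuppAntidiag] at hi hj
    exact hi.1.symm.trans hj.1
  rw [restrictTotalDegree, Module.finrank_eq_nat_card_basis (basisRestrictSupport k _), exponents,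
    Nat.card_coe_set_eq, Set.ncard_coe_finset, Finset.card_biUnion disjoint]
  simp [Finset.card_finsuppAntidiag_nat_eq_multichoose, Nat.sum_range_multichoose]

/-- The substitution `F ↦ F(X + p)`. -/
noncomputable def recenter (p : σ → k) : MvPolynomial σ k →ₐ[k] MvPolynomial σ k :=
  aeval fun i => X i + C (p i)

lemma recenter_injective (p : σ → k) : Function.Injective (recenter p) := by
  have left_inv : (recenter (-p)).comp (recenter p) = AlgHom.id k _ := by
    ext i : 1
    simp [recenter]
  exact Function.LeftInverse.injective (g := recenter (-p)) (DFunLike.congr_fun left_inv)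

lemma totalDegree_recenter_le (p : σ → k) (F : MvPolynomial σ k) :
    (recenter p F).totalDegree ≤ F.totalDegree := by
  rw [← mem_restrictTotalDegree, ← one_mul F.totalDegree]
  refine restrictTotalDegree_pow_le 1 _ (aeval_mem_pow ?_ (fun i => ?_) le_rfl)
  · rw [mem_restrictTotalDegree, totalDegree_one]
    exact zero_le_one
  · rw [mem_restrictTotalDegree]
    exact (totalDegree_add _ _).trans (by simp)

/-- The ideal of the polynomials vanishing to order at least `j` at the point `p`. -/
noncomputable def vanishingIdealAt (p : σ → k) (j : ℕ) : Ideal (MvPolynomial σ k) :=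
  (idealOfVars σ k ^ j).comap (recenter p)

lemma mem_vanishingIdealAt_iff {p : σ → k} {j : ℕ} {F : MvPolynomial σ k} :
    F ∈ vanishingIdealAt p j ↔ ∀ d, d.degree < j → (recenter p F).coeff d = 0 :=
  mem_pow_idealOfVars_iff' ..

lemma vanishingIdealAt_pow_le (p : σ → k) (j n : ℕ) :
    vanishingIdealAt p j ^ n ≤ vanishingIdealAt p (j * n) := by
  rw [vanishingIdealAt, vanishingIdealAt, pow_mul]
  exact Ideal.le_comap_pow _ _

lemma eq_zero_of_mem_vanishingIdealAt {p : σ → k} {j : ℕ} {F : MvPolynomial σ k}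
    (hF : F ∈ vanishingIdealAt p j) (hdeg : F.totalDegree < j) : F = 0 := by
  refine (map_eq_zero_iff (recenter p) (recenter_injective p)).mp (ext _ _ fun d => ?_)
  by_cases hd : d.degree < j
  · exact mem_vanishingIdealAt_iff.mp hF d hd
  · exact coeff_eq_zero_of_totalDegree_lt
      (((totalDegree_recenter_le p F).trans_lt hdeg).trans_le (not_lt.mp hd))

lemma constantCoeff_recenter (p : σ → k) (F : MvPolynomial σ k) :
    constantCoeff (recenter p F) = eval p F := by
  have comp_eq : constantCoeff.comp (recenter p).toRingHom = eval p := by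
    ext i <;> simp [recenter]
  exact DFunLike.congr_fun comp_eq F

lemma mem_vanishingIdealAt_of_mul_mem {p : σ → k} {j : ℕ} {s F : MvPolynomial σ k}
    (hs : eval p s ≠ 0) (hF : s * F ∈ vanishingIdealAt p j) : F ∈ vanishingIdealAt p j := by
  set u := recenter p s
  have sub_mem : C (eval p s) - u ∈ idealOfVars σ k := by
    rw [← pow_one (idealOfVars σ k), mem_pow_idealOfVars_iff']
    intro d hd
    obtain rfl : d = 0 := (Finsupp.degree_eq_zero_iff d).mp (Nat.lt_one_iff.mp hd)
    simp [← constantCoeff_recenter, u, constantCoeff_eq]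
  have coprime : Ideal.span {u} ⊔ idealOfVars σ k = ⊤ := by
    refine Ideal.eq_top_of_isUnit_mem _ ?_ (hs.isUnit.map C)
    rw [← sub_add_cancel (C (eval p s)) u]
    exact add_mem (Ideal.mem_sup_right sub_mem)
      (Ideal.mem_sup_left (Ideal.mem_span_singleton_self u))
  have mul_le : Ideal.span {recenter p F} * (Ideal.span {u} ⊔ idealOfVars σ k ^ j) ≤
      idealOfVars σ k ^ j := by
    rw [Ideal.mul_sup, Ideal.span_singleton_mul_span_singleton, mul_comm (recenter p F),
      ← map_mul, sup_le_iff, Ideal.span_singleton_le_iff_mem]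
    exact ⟨hF, Ideal.mul_le_right⟩
  rw [Ideal.sup_pow_eq_top coprime, Ideal.mul_top, Ideal.span_singleton_le_iff_mem] at mul_le
  exact mul_le

/-- The Taylor polynomial at `p` of degree at most `m`, recentered at the origin. -/
noncomputable def jet (p : σ → k) (m : ℕ) :
    MvPolynomial σ k →ₗ[k] restrictTotalDegree σ k m :=
  ((∑ i ∈ Finset.range (m + 1), homogeneousComponent i) ∘ₗ (recenter p).toLinearMap).codRestrict _
    fun F => by
      rw [LinearMap.comp_apply, LinearMap.sum_apply]
      refine Submodule.sum_mem _ fun i hi => (mem_restrictTotalDegree ..).mpr ?_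
      exact (homogeneousComponent_isHomogeneous i _).totalDegree_le.trans
        (Finset.mem_range_succ_iff.mp hi)

lemma mem_vanishingIdealAt_of_jet_eq_zero {p : σ → k} {m : ℕ} {F : MvPolynomial σ k}
    (hF : jet p m F = 0) : F ∈ vanishingIdealAt p (m + 1) := by
  refine mem_vanishingIdealAt_iff.mpr fun d hd => ?_
  have coeff_jet : coeff d (jet p m F : MvPolynomial σ k) = coeff d (recenter p F) := by
    simp [jet, coeff_sum, coeff_homogeneousComponent, Order.lt_add_one_iff.mp hd]
  rw [← coeff_jet, hF, ZeroMemClass.coe_zero, coeff_zero]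

end VanishingOrder

/-! ### Growth of the powers of a subspace -/

lemma exists_linearIndependent_smul_mem_span {R M : Type*} [CommRing R] [IsDomain R]
    [AddCommGroup M] [Module R M] {ι : Type*} [Finite ι] (v : ι → M) :
    ∃ D, ∃ b : Fin D → M, LinearIndependent R b ∧ Set.range b ⊆ Set.range v ∧
      ∃ a : R, a ≠ 0 ∧ ∀ i, a • v i ∈ Submodule.span R (Set.range b) := by
  classical
  have := Fintype.ofFinite ι
  obtain ⟨s, hs, hmax⟩ := exists_maximal_linearIndepOn R v
  have exists_smul_mem : ∀ i, ∃ a : R, a ≠ 0 ∧ a • v i ∈ Submodule.span R (v '' s) := by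
    intro i
    by_cases hi : i ∈ s
    · exact ⟨1, one_ne_zero, by simpa using Submodule.subset_span (Set.mem_image_of_mem v hi)⟩
    · exact hmax i hi
  choose a ha hav using exists_smul_mem
  obtain ⟨D, ⟨e⟩⟩ := Finite.exists_equiv_fin s
  have range_eq : Set.range ((fun i : s => v i) ∘ e.symm) = v '' s := by
    rw [e.symm.surjective.range_comp, Set.image_eq_range]
  refine ⟨D, _, (linearIndependent_equiv e.symm).mpr hs, range_eq ▸ Set.image_subset_range v s,
    ∏ i, a i, Finset.prod_ne_zero_iff.mpr fun i _ => ha i, fun i => ?_⟩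
  rw [range_eq, ← Finset.prod_erase_mul Finset.univ a (Finset.mem_univ i), mul_smul]
  exact Submodule.smul_mem _ _ (hav i)

section PolySpan

variable {k B : Type*} [Field k] [CommRing B] [Algebra k B] {r : ℕ}
  [Algebra (MvPolynomial (Fin r) k) B] [IsScalarTower k (MvPolynomial (Fin r) k) B]
  {ι : Type*} [Fintype ι] {b : ι → B}

variable (k r) in
/-- The combinations of the family `b` with polynomial coefficients of degree at most `t`. -/
noncomputable def polySpan (b : ι → B) (t : ℕ) : Submodule k B :=
  LinearMap.range ((Fintype.linearCombination (MvPolynomial (Fin r) k) b).restrictScalars k ∘ₗ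
    (restrictTotalDegree (Fin r) k t).subtype.compLeft ι)

lemma mem_polySpan_iff {t : ℕ} {x : B} : x ∈ polySpan k r b t ↔
    ∃ a : ι → MvPolynomial (Fin r) k, (∀ i, (a i).totalDegree ≤ t) ∧ ∑ i, a i • b i = x := by
  constructor
  · rintro ⟨a, rfl⟩
    exact ⟨fun i => a i, fun i => (mem_restrictTotalDegree ..).mp (a i).2,
      by simp [Fintype.linearCombination_apply]⟩
  · rintro ⟨a, ha, rfl⟩
    exact ⟨fun i => ⟨a i, (mem_restrictTotalDegree ..).mpr (ha i)⟩,
      by simp [Fintype.linearCombination_apply]⟩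

lemma polySpan_mono (b : ι → B) : Monotone (polySpan k r b) := by
  intro t u htu x hx
  obtain ⟨a, ha, rfl⟩ := mem_polySpan_iff.mp hx
  exact mem_polySpan_iff.mpr ⟨a, fun i => (ha i).trans htu, rfl⟩

lemma mem_span_iff_exists_mem_polySpan {x : B} :
    x ∈ Submodule.span (MvPolynomial (Fin r) k) (Set.range b) ↔ ∃ t, x ∈ polySpan k r b t := by
  simp only [mem_polySpan_iff, Submodule.mem_span_range_iff_exists_fun]
  constructor
  · rintro ⟨a, rfl⟩
    exact ⟨Finset.univ.sup fun i => (a i).totalDegree, a,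
      fun i => Finset.le_sup (f := fun i => (a i).totalDegree) (Finset.mem_univ i), rfl⟩
  · rintro ⟨_, a, -, rfl⟩
    exact ⟨a, rfl⟩

lemma smul_mem_polySpan {m t : ℕ} {a : MvPolynomial (Fin r) k} {x : B} (ha : a.totalDegree ≤ m)
    (hx : x ∈ polySpan k r b t) : a • x ∈ polySpan k r b (m + t) := by
  obtain ⟨c, hc, rfl⟩ := mem_polySpan_iff.mp hx
  exact mem_polySpan_iff.mpr ⟨fun i => a * c i,
    fun i => (totalDegree_mul _ _).trans (add_le_add ha (hc i)),
    by simp only [mul_smul, Finset.smul_sum]⟩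

lemma finrank_polySpan (hb : LinearIndependent (MvPolynomial (Fin r) k) b) (t : ℕ) :
    Module.finrank k (polySpan k r b t) = Fintype.card ι * (t + r).choose r := by
  have injective : Function.Injective
      ((Fintype.linearCombination (MvPolynomial (Fin r) k) b).restrictScalars k ∘ₗ
        (restrictTotalDegree (Fin r) k t).subtype.compLeft ι) :=
    hb.fintypeLinearCombination_injective.comp (Subtype.val_injective.comp_left)
  rw [polySpan, LinearMap.finrank_range_of_inj injective, Module.finrank_pi_fintype]
  simp [finrank_restrictTotalDegree]

lemma algebraMap_eq_aeval (a : MvPolynomial (Fin r) k) : algebraMap (MvPolynomial (Fin r) k) B a =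
    aeval (fun i => algebraMap (MvPolynomial (Fin r) k) B (X i)) a :=
  DFunLike.congr_fun (aeval_unique (IsScalarTower.toAlgHom k (MvPolynomial (Fin r) k) B)) a

lemma polySpan_le_pow {V : Submodule k B} {q : ℕ} (h1 : 1 ∈ V)
    (hX : ∀ i, algebraMap (MvPolynomial (Fin r) k) B (X i) ∈ V) (hb : ∀ i, b i ∈ V ^ q) (t : ℕ) :
    polySpan k r b t ≤ V ^ (t + q) := by
  intro x hx
  obtain ⟨a, ha, rfl⟩ := mem_polySpan_iff.mp hx
  refine Submodule.sum_mem _ fun i _ => ?_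
  rw [Algebra.smul_def, algebraMap_eq_aeval, pow_add]
  exact Submodule.mul_mem_mul (aeval_mem_pow h1 hX (ha i)) (hb i)

lemma smul_mem_polySpan_of_mem_mul {t : ℕ} {U : Submodule k B} {s : MvPolynomial (Fin r) k}
    (hU : ∀ x ∈ U, s • x ∈ polySpan k r b t) {m : ℕ} {x : B}
    (hx : x ∈ oneSpan k (fun i => algebraMap (MvPolynomial (Fin r) k) B (X i)) ^ m * U) :
    s • x ∈ polySpan k r b (m + t) := by
  have oneSpan_le : oneSpan k (fun i => algebraMap (MvPolynomial (Fin r) k) B (X i)) ≤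
      (restrictTotalDegree (Fin r) k 1).map
        (IsScalarTower.toAlgHom k (MvPolynomial (Fin r) k) B).toLinearMap := by
    refine oneSpan_le_iff.mpr ⟨⟨1, ?_, by simp⟩, fun i => ⟨X i, ?_, rfl⟩⟩ <;>
      simp [mem_restrictTotalDegree]
  induction hx using Submodule.mul_induction_on' with
  | mem_mul_mem w hw x hx =>
    have hw := pow_le_pow_left' oneSpan_le m hw
    rw [← Submodule.map_pow] at hw
    obtain ⟨a, ha, rfl⟩ := hw
    have ha := (mem_restrictTotalDegree ..).mp (restrictTotalDegree_pow_le 1 m ha)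
    rw [one_mul] at ha
    rw [AlgHom.toLinearMap_apply, IsScalarTower.coe_toAlgHom', ← Algebra.smul_def, smul_comm]
    exact smul_mem_polySpan ha (hU x hx)
  | add x _ y _ hx hy =>
    rw [smul_add]
    exact add_mem hx hy

lemma exists_linearIndependent_smul_mem_polySpan_of_fg {U : Submodule k B} (hU : U.FG) :
    ∃ D, ∃ b : Fin D → B, LinearIndependent (MvPolynomial (Fin r) k) b ∧ (∀ i, b i ∈ U) ∧
      ∃ s : MvPolynomial (Fin r) k, s ≠ 0 ∧ ∃ c, ∀ x ∈ U, s • x ∈ polySpan k r b c := by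
  obtain ⟨G, rfl⟩ := hU
  obtain ⟨D, b, hb, hbG, s, hs, hsG⟩ :=
    exists_linearIndependent_smul_mem_span (R := MvPolynomial (Fin r) k) (Subtype.val : G → B)
  have exists_mem_polySpan (x : G) := mem_span_iff_exists_mem_polySpan.mp (hsG x)
  choose c hc using exists_mem_polySpan
  have b_mem (i) : b i ∈ Submodule.span k (G : Set B) := by
    obtain ⟨x, hx⟩ := hbG ⟨i, rfl⟩
    exact hx ▸ Submodule.subset_span x.2
  refine ⟨D, b, hb, b_mem, s, hs, ∑ x, c x, fun x hx => ?_⟩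
  induction hx using Submodule.span_induction with
  | mem x hx =>
    have c_le : c ⟨x, hx⟩ ≤ ∑ x, c x :=
      Finset.single_le_sum (fun _ _ => Nat.zero_le _) (Finset.mem_univ _)
    exact polySpan_mono b c_le (hc ⟨x, hx⟩)
  | zero =>
    rw [smul_zero]
    exact zero_mem _
  | add x y _ _ hx hy =>
    rw [smul_add]
    exact add_mem hx hy
  | smul a x _ hx =>
    rw [smul_comm]
    exact Submodule.smul_mem _ _ hx

theorem exists_linearIndependent_smul_mem_polySpan {V : Submodule k B} {q : ℕ} (hfg : V.FG)
    (h1 : 1 ∈ V) (hred : V ^ (q + 1) ≤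
      oneSpan k (fun i => algebraMap (MvPolynomial (Fin r) k) B (X i)) * V ^ q) :
    ∃ D, ∃ b : Fin D → B, LinearIndependent (MvPolynomial (Fin r) k) b ∧ (∀ i, b i ∈ V ^ q) ∧
      ∃ s : MvPolynomial (Fin r) k, s ≠ 0 ∧
        ∃ c, ∀ m, ∀ g ∈ V ^ m, s • g ∈ polySpan k r b (m + c) := by
  obtain ⟨D, b, hb, hbq, s, hs, c, hc⟩ :=
    exists_linearIndependent_smul_mem_polySpan_of_fg (r := r) (hfg.pow q)
  refine ⟨D, b, hb, hbq, s, hs, c, fun m g hg => smul_mem_polySpan_of_mem_mul hc ?_⟩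
  exact pow_add_le_pow_mul_pow hred m
    (pow_le_pow_right₀ (Submodule.one_le.mpr h1) (Nat.le_add_right m q) hg)

end PolySpan

section PowerGrowth

lemma mul_mem_mul_smul_mul {R B : Type*} [CommRing R] [CommRing B] [Algebra R B] {I J : Ideal R}
    {M N : Submodule R B} {x y : B} (hx : x ∈ I • M) (hy : y ∈ J • N) :
    x * y ∈ (I * J) • (M * N) := by
  induction hx using Submodule.smul_induction_on' with
  | smul a ha u hu =>
    induction hy using Submodule.smul_induction_on' with
    | smul c hc v hv =>
      rw [smul_mul_smul_comm]
      exact Submodule.smul_mem_smul (Ideal.mul_mem_mul ha hc) (Submodule.mul_mem_mul hu hv)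
    | add y _ y' _ hy hy' =>
      rw [mul_add]
      exact add_mem hy hy'
  | add x _ x' _ hx hx' =>
    rw [add_mul]
    exact add_mem hx hx'

lemma pow_smul_pow_mem {R B : Type*} [CommRing R] [CommRing B] [Algebra R B] {J : Ideal R}
    {N : Submodule R B} {s : R} {g : B} (hN : N * N ≤ N.comap (LinearMap.lsmul R B s))
    (hg : s • g ∈ J • N) (n : ℕ) : s ^ (2 * n) • (s • g ^ (n + 1)) ∈ J ^ (n + 1) • N := by
  induction n with
  | zero => simpa using hg
  | succ n ih =>
    have mul_mem : (s • g) * (s ^ (2 * n) • (s • g ^ (n + 1))) ∈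
        J ^ (n + 2) • N.comap (LinearMap.lsmul R B s) := by
      rw [pow_succ' J (n + 1)]
      exact Submodule.smul_mono le_rfl hN (mul_mem_mul_smul_mul hg ih)
    have smul_mul_mem := (Submodule.smul_comap_le_comap_smul _ _ _ mul_mem :)
    rw [Submodule.mem_comap, LinearMap.lsmul_apply] at smul_mul_mem
    convert smul_mul_mem using 1
    simp only [Algebra.smul_def, map_pow]
    ring

variable {k B : Type*} [Field k] [CommRing B] [Algebra k B] {r : ℕ}
  [Algebra (MvPolynomial (Fin r) k) B] [IsScalarTower k (MvPolynomial (Fin r) k) B]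
  {ι : Type*} [Fintype ι] {b : ι → B}

lemma mem_of_sum_smul_mem {R M : Type*} [CommRing R] [AddCommGroup M] [Module R M] {b : ι → M}
    {J : Ideal R} (hb : LinearIndependent R b) {a : ι → R}
    (ha : ∑ i, a i • b i ∈ J • Submodule.span R (Set.range b)) (i : ι) : a i ∈ J := by
  obtain ⟨c, hc, hca⟩ := (Submodule.mem_ideal_smul_span_iff_exists_sum J b _).mp ha
  rw [c.sum_fintype _ (by simp)] at hca
  have c_eq : ⇑c = a := hb.fintypeLinearCombination_injective (by
    simpa [Fintype.linearCombination_apply] using hca)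
  exact c_eq ▸ hc i

lemma eq_zero_of_smul_mem_vanishingIdealAt_smul [IsDomain B]
    [FaithfulSMul (MvPolynomial (Fin r) k) B] {V : Submodule k B}
    (hb : LinearIndependent (MvPolynomial (Fin r) k) b) {q : ℕ} (hbq : ∀ i, b i ∈ V ^ q)
    {s : MvPolynomial (Fin r) k} {c : ℕ} (hs : ∀ m, ∀ g ∈ V ^ m, s • g ∈ polySpan k r b (m + c))
    {p : Fin r → k} (hp : eval p s ≠ 0) {m : ℕ} {g : B} (hgV : g ∈ V ^ m)
    (hg : s • g ∈
      vanishingIdealAt p (m + 1) • Submodule.span (MvPolynomial (Fin r) k) (Set.range b)) :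
    g = 0 := by
  have mul_le : Submodule.span (MvPolynomial (Fin r) k) (Set.range b) *
      Submodule.span (MvPolynomial (Fin r) k) (Set.range b) ≤
      (Submodule.span (MvPolynomial (Fin r) k) (Set.range b)).comap (LinearMap.lsmul _ B s) := by
    rw [Submodule.span_mul_span, Submodule.span_le]
    rintro _ ⟨_, ⟨i, rfl⟩, _, ⟨j, rfl⟩, rfl⟩
    exact mem_span_iff_exists_mem_polySpan.mpr
      ⟨_, hs (q + q) _ (pow_add V q q ▸ Submodule.mul_mem_mul (hbq i) (hbq j))⟩
  -- `g ^ (c + 1)` vanishes to order `(m + 1) * (c + 1)` but only has degree `m * (c + 1) + c`.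
  obtain ⟨a, ha, ha_eq⟩ := mem_polySpan_iff.mp
    (hs (m * (c + 1)) (g ^ (c + 1)) (pow_mul V m (c + 1) ▸ Submodule.pow_mem_pow _ hgV _))
  have a_mem (i) : a i ∈ vanishingIdealAt p ((m + 1) * (c + 1)) := by
    have power_mem := pow_smul_pow_mem mul_le hg c
    rw [← ha_eq, Finset.smul_sum] at power_mem
    simp only [← mul_smul] at power_mem
    refine mem_vanishingIdealAt_of_mul_mem (s := s ^ (2 * c)) ?_
      (vanishingIdealAt_pow_le p _ _ (mem_of_sum_smul_mem hb power_mem i))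
    rw [map_pow]
    exact pow_ne_zero _ hp
  have a_eq_zero (i) : a i = 0 :=
    eq_zero_of_mem_vanishingIdealAt (a_mem i) ((ha i).trans_lt (by nlinarith))
  have smul_pow_eq_zero : s • g ^ (c + 1) = 0 := by simp [← ha_eq, a_eq_zero]
  have s_ne_zero : s ≠ 0 := by
    rintro rfl
    exact hp (map_zero _)
  have := FaithfulSMul.to_isTorsionFree (MvPolynomial (Fin r) k) B
  exact pow_eq_zero_iff (Nat.succ_ne_zero c) |>.mp
    ((smul_eq_zero_iff_right s_ne_zero).mp smul_pow_eq_zero)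

lemma finrank_pow_le [Infinite k] [IsDomain B] [FaithfulSMul (MvPolynomial (Fin r) k) B]
    {V : Submodule k B} (hb : LinearIndependent (MvPolynomial (Fin r) k) b) {q : ℕ}
    (hbq : ∀ i, b i ∈ V ^ q) {s : MvPolynomial (Fin r) k} (s_ne_zero : s ≠ 0) {c : ℕ}
    (hs : ∀ m, ∀ g ∈ V ^ m, s • g ∈ polySpan k r b (m + c)) (m : ℕ) :
    Module.finrank k ↥(V ^ m) ≤ Fintype.card ι * (m + r).choose r := by
  obtain ⟨p, hp⟩ : ∃ p, eval p s ≠ 0 := by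
    by_contra! eval_eq_zero
    exact s_ne_zero (MvPolynomial.funext fun p => by rw [eval_eq_zero, map_zero])
  let smulMap : ↥(V ^ m) →ₗ[k] Submodule.span (MvPolynomial (Fin r) k) (Set.range b) :=
    { toFun g := ⟨s • g, mem_span_iff_exists_mem_polySpan.mpr ⟨_, hs m g g.2⟩⟩
      map_add' g g' := Subtype.ext (smul_add s (g : B) g')
      map_smul' a g := Subtype.ext (smul_comm s a (g : B)) }
  let jets : ↥(V ^ m) →ₗ[k] ι → restrictTotalDegree (Fin r) k m :=
    LinearMap.pi fun i => jet p m ∘ₗ (Finsupp.lapply i ∘ₗ hb.repr).restrictScalars k ∘ₗ smulMap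
  have jets_injective : Function.Injective jets := by
    refine (injective_iff_map_eq_zero jets).mpr fun g hg => Subtype.ext ?_
    refine eq_zero_of_smul_mem_vanishingIdealAt_smul hb hbq hs hp g.2 ?_
    have coord_mem (i) : hb.repr (smulMap g) i ∈ vanishingIdealAt p (m + 1) :=
      mem_vanishingIdealAt_of_jet_eq_zero (congrFun hg i)
    rw [← show (smulMap g : B) = s • (g : B) from rfl, ← hb.linearCombination_repr,
      Finsupp.linearCombination_apply]
    exact Submodule.sum_mem _ fun i _ =>
      Submodule.smul_mem_smul (coord_mem i) (Submodule.subset_span ⟨i, rfl⟩)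
  refine (LinearMap.finrank_le_finrank_of_injective jets_injective).trans_eq ?_
  rw [Module.finrank_pi_fintype]
  simp [finrank_restrictTotalDegree]

end PowerGrowth

lemma oneSpan_fg {k B : Type*} [Field k] [CommRing B] [Algebra k B] {σ : Type*} [Finite σ]
    (x : σ → B) : (oneSpan k x).FG := by
  rw [oneSpan, Submodule.one_eq_span]
  exact (Submodule.fg_span_singleton 1).sup (Submodule.fg_span (Set.finite_range x))

theorem exists_finrank_oneSpan_pow_bounds {k B : Type*} [Field k] [Infinite k] [CommRing B]
    [IsDomain B] [Algebra k B] {n : ℕ} (x : Fin n → B) :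
    ∃ r D, 0 < D ∧ (∀ m, Module.finrank k ↥(oneSpan k x ^ m) ≤ D * (m + r).choose r) ∧
      ∃ c, ∀ t, D * (t + r).choose r ≤ Module.finrank k ↥(oneSpan k x ^ (t + c)) := by
  obtain ⟨r, y, hy, y_le, q, hq⟩ := exists_algebraicIndependent_isReduction (k := k) x
  let : Algebra (MvPolynomial (Fin r) k) B := (aeval y).toAlgebra
  have : IsScalarTower k (MvPolynomial (Fin r) k) B :=
    IsScalarTower.of_algebraMap_eq fun a => ((aeval y).commutes a).symm
  have : FaithfulSMul (MvPolynomial (Fin r) k) B :=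
    (faithfulSMul_iff_algebraMap_injective _ _).mpr hy
  have algebraMap_X : (fun i => algebraMap (MvPolynomial (Fin r) k) B (X i)) = y :=
    funext fun i => aeval_X y i
  obtain ⟨D, b, hb, hbq, s, hs, c, hc⟩ := exists_linearIndependent_smul_mem_polySpan
    (r := r) (oneSpan_fg x) (one_mem_oneSpan x) (by rwa [algebraMap_X])
  have D_pos : 0 < D := by
    by_contra! hD
    obtain rfl := Nat.le_zero.mp hD
    obtain ⟨a, -, ha⟩ := mem_polySpan_iff.mp
      (hc 0 1 (pow_zero (oneSpan k x) ▸ Submodule.one_le.mp le_rfl))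
    rw [Finset.univ_eq_empty, Finset.sum_empty, eq_comm, ← Algebra.algebraMap_eq_smul_one] at ha
    exact hs ((map_eq_zero_iff _ hy).mp ha)
  refine ⟨r, D, D_pos, fun m => ?_, q, fun t => ?_⟩
  · simpa using finrank_pow_le hb hbq hs hc m
  · have := Module.Finite.iff_fg.mpr ((oneSpan_fg (k := k) x).pow (t + q))
    have X_mem (i) : algebraMap (MvPolynomial (Fin r) k) B (X i) ∈ oneSpan k x :=
      congrFun algebraMap_X i ▸ y_le (mem_oneSpan y i)
    simpa [finrank_polySpan hb] using
      Submodule.finrank_mono (polySpan_le_pow (one_mem_oneSpan x) X_mem hbq t)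

/-! ### Hilbert functions of prime ideals -/

section PrimeIdeal

lemma aeval_const_mul_of_isHomogeneous {σ R A : Type*} [CommSemiring R] [CommSemiring A]
    [Algebra R A] {m : ℕ} {F : MvPolynomial σ R} (hF : F.IsHomogeneous m) (c : A) (x : σ → A) :
    aeval (fun i => c * x i) F = c ^ m * aeval x F := by
  rw [aeval_def, aeval_def, eval₂_eq, eval₂_eq, Finset.mul_sum]
  refine Finset.sum_congr rfl fun d hd => ?_
  simp only [mul_pow, Finset.prod_mul_distrib, Finset.prod_pow_eq_pow_sum]
  rw [hF.degree_eq_sum_deg_support hd, mul_left_comm]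

variable {k : Type*} [Field k]

lemma map_aeval_homogeneousSubmodule {σ B : Type*} [CommRing B] [Algebra k B] {x : σ → B} {j : σ}
    (hx : x j = 1) (m : ℕ) :
    (homogeneousSubmodule σ k m).map (aeval (R := k) x).toLinearMap = oneSpan k x ^ m := by
  have map_one : (homogeneousSubmodule σ k 1).map (aeval (R := k) x).toLinearMap = oneSpan k x := by
    refine le_antisymm ?_ (oneSpan_le_iff.mpr ⟨⟨X j, isHomogeneous_X k j, ?_⟩, fun i =>
      ⟨X i, isHomogeneous_X k i, aeval_X x i⟩⟩)
    · rw [Submodule.map_le_iff_le_comap]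
      intro F hF
      simpa using aeval_mem_pow_of_isHomogeneous (mem_oneSpan x) hF
    · rw [AlgHom.toLinearMap_apply, aeval_X, hx]
  rw [← homogeneousSubmodule_one_pow, Submodule.map_pow, map_one]

variable {n : ℕ} {P : Ideal (MvPolynomial (Fin (n + 1)) k)}

lemma exists_hilbF_eq_finrank_oneSpan_pow (hP : P.IsPrime) {j : Fin (n + 1)} (hj : X j ∉ P) :
    ∃ x : Fin (n + 1) → FractionRing (MvPolynomial (Fin (n + 1)) k ⧸ P),
      ∀ m, hilbF k P m = Module.finrank k ↥(oneSpan k x ^ m) := by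
  let φ : MvPolynomial (Fin (n + 1)) k →ₐ[k] FractionRing (MvPolynomial (Fin (n + 1)) k ⧸ P) :=
    (IsScalarTower.toAlgHom k (MvPolynomial (Fin (n + 1)) k ⧸ P) _).comp (Ideal.Quotient.mkₐ k P)
  have φ_eq_zero_iff (F) : φ F = 0 ↔ F ∈ P := by
    rw [← Ideal.Quotient.eq_zero_iff_mem]
    exact map_eq_zero_iff _ (IsFractionRing.injective (MvPolynomial (Fin (n + 1)) k ⧸ P) _)
  have φ_X_ne_zero : φ (X j) ≠ 0 := fun h => hj ((φ_eq_zero_iff _).mp h)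
  let x i := φ (X i) / φ (X j)
  have φ_eq {m : ℕ} {F : MvPolynomial (Fin (n + 1)) k} (hF : F.IsHomogeneous m) :
      φ F = φ (X j) ^ m * aeval x F := by
    have const_mul_x : (fun i => φ (X j) * x i) = φ ∘ X :=
      funext fun i => mul_div_cancel₀ (φ (X i)) φ_X_ne_zero
    rw [← aeval_const_mul_of_isHomogeneous hF, const_mul_x, ← aeval_unique φ]
  have mem_iff {m : ℕ} {F : MvPolynomial (Fin (n + 1)) k} (hF : F.IsHomogeneous m) :
      F ∈ P ↔ aeval x F = 0 := by
    rw [← φ_eq_zero_iff, φ_eq hF, mul_eq_zero_iff_left (pow_ne_zero m φ_X_ne_zero)]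
  have x_j : x j = 1 := div_self φ_X_ne_zero
  refine ⟨x, fun m => ?_⟩
  rw [← map_aeval_homogeneousSubmodule x_j, finrank_map_homogeneousSubmodule,
    hilbF_eq_gradedCodim]
  exact le_antisymm (gradedCodim_anti fun F hF => (mem_iff hF.1).mpr hF.2)
    (gradedCodim_anti fun F hF => (mem_iff hF.1).mp hF.2)

lemma hilbF_one_eq_zero_iff : hilbF k P 1 = 0 ↔ ∀ j, X j ∈ P := by
  rw [hilbF_eq_gradedCodim, gradedCodim_eq_zero_iff, homogeneousSubmodule_one_eq_span_X,
    Submodule.span_le, Set.range_subset_iff]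
  rfl

theorem exists_hilbF_bounds (hP : P.IsPrime) (hP1 : hilbF k P 1 ≠ 0) :
    ∃ r D, 0 < D ∧ (∀ m, hilbF k P m ≤ D * (m + r).choose r) ∧
      ∃ c, ∀ t, D * (t + r).choose r ≤ hilbF k P (t + c) := by
  let k' := FractionRing (MvPolynomial Unit k)
  let P' := P.map (map (algebraMap k k'))
  have hilbF_eq (m) : hilbF k' P' m = hilbF k P m := hilbF_map_algebraMap k' P m
  obtain ⟨j, hj⟩ : ∃ j, X j ∉ P' := by
    by_contra! hX
    exact hP1 (hilbF_eq 1 ▸ hilbF_one_eq_zero_iff.mpr hX)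
  obtain ⟨x, hx⟩ := exists_hilbF_eq_finrank_oneSpan_pow (isPrime_map_fractionRing hP) hj
  have : P'.IsPrime := isPrime_map_fractionRing hP
  obtain ⟨r, D, D_pos, upper, c, lower⟩ := exists_finrank_oneSpan_pow_bounds (k := k') x
  refine ⟨r, D, D_pos, fun m => ?_, c, fun t => ?_⟩
  · exact hilbF_eq m ▸ (hx m).trans_le (upper m)
  · exact hilbF_eq (t + c) ▸ (lower t).trans_eq (hx (t + c)).symm

end PrimeIdeal

section KrullDimension

lemma ringKrullDim_le_of_isIntegral (A B : Type*) [CommRing A] [CommRing B] [Algebra A B]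
    [Algebra.IsIntegral A B] : ringKrullDim B ≤ ringKrullDim A :=
  Order.krullDim_le_of_strictMono (PrimeSpectrum.comap (algebraMap A B)) fun _ _ hpq =>
    Ideal.IsIntegral.comap_lt_comap hpq

lemma exists_injective_ringKrullDim_le (k B : Type*) [Field k] [CommRing B] [Nontrivial B]
    [Algebra k B] [Algebra.FiniteType k B] :
    ∃ s : ℕ, ∃ g : MvPolynomial (Fin s) k →ₐ[k] B, Function.Injective g ∧ ringKrullDim B ≤ s := by
  obtain ⟨s, g, g_injective, g_integral⟩ := exists_integral_inj_algHom_of_fg k B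
  refine ⟨s, g, g_injective, ?_⟩
  let : Algebra (MvPolynomial (Fin s) k) B := g.toAlgebra
  have : Algebra.IsIntegral (MvPolynomial (Fin s) k) B := ⟨g_integral⟩
  refine (ringKrullDim_le_of_isIntegral (MvPolynomial (Fin s) k) B).trans_eq ?_
  simp [MvPolynomial.ringKrullDim_of_isNoetherianRing, ringKrullDim_eq_zero_of_field]

variable {k : Type*} [Field k]

lemma finrank_finset_sup_le {ι E : Type*} [AddCommGroup E] [Module k E] (s : Finset ι)
    (U : ι → Submodule k E) [∀ i, Module.Finite k (U i)] :
    Module.finrank k ↥(s.sup U) ≤ ∑ i ∈ s, Module.finrank k (U i) := by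
  classical
  induction s using Finset.induction_on with
  | empty => simp
  | insert i s hi ih =>
    rw [Finset.sup_insert, Finset.sum_insert hi]
    exact (Submodule.finrank_add_le_finrank_add_finrank _ _).trans (by gcongr)

variable {n : ℕ} {I : Ideal (MvPolynomial (Fin (n + 1)) k)}

variable (I) in
lemma finrank_map_restrictTotalDegree_le_sum_hilbF (m : ℕ) :
    Module.finrank k ((restrictTotalDegree (Fin (n + 1)) k m).map
      (Ideal.Quotient.mkₐ k I).toLinearMap) ≤ ∑ i ∈ Finset.range (m + 1), hilbF k I i := by
  let U i := (homogeneousSubmodule (Fin (n + 1)) k i).map (Ideal.Quotient.mkₐ k I).toLinearMap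
  refine (Submodule.finrank_mono ?_).trans (finrank_finset_sup_le (Finset.range (m + 1)) U)
  rw [Submodule.map_le_iff_le_comap]
  intro F hF
  rw [mem_restrictTotalDegree] at hF
  rw [← sum_homogeneousComponent F]
  refine Submodule.sum_mem _ fun i hi => ?_
  have U_le : U i ≤ (Finset.range (m + 1)).sup U :=
    Finset.le_sup (Finset.range_mono (Nat.succ_le_succ hF) hi)
  exact U_le (Submodule.mem_map_of_mem (homogeneousComponent_mem i F))

lemma exists_choose_le_finrank_map_restrictTotalDegree {s : ℕ}
    {g : MvPolynomial (Fin s) k →ₐ[k] MvPolynomial (Fin (n + 1)) k ⧸ I}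
    (hg : Function.Injective g) :
    ∃ N, ∀ m, (m + s).choose s ≤ Module.finrank k
      ((restrictTotalDegree (Fin (n + 1)) k (N * m)).map (Ideal.Quotient.mkₐ k I).toLinearMap) := by
  choose F hF using fun i => Ideal.Quotient.mkₐ_surjective k I (g (X i))
  let N := ∑ i, (F i).totalDegree
  let V := (restrictTotalDegree (Fin (n + 1)) k N).map (Ideal.Quotient.mkₐ k I).toLinearMap
  have one_mem : 1 ∈ V := ⟨1, by simp [mem_restrictTotalDegree], map_one (Ideal.Quotient.mkₐ k I)⟩
  have g_X_mem (i) : g (X i) ∈ V := by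
    refine ⟨F i, (mem_restrictTotalDegree ..).mpr ?_, hF i⟩
    exact Finset.single_le_sum (f := fun i => (F i).totalDegree) (fun _ _ => Nat.zero_le _)
      (Finset.mem_univ i)
  have pow_le (m : ℕ) : V ^ m ≤ (restrictTotalDegree (Fin (n + 1)) k (N * m)).map
      (Ideal.Quotient.mkₐ k I).toLinearMap := by
    rw [← Submodule.map_pow]
    exact Submodule.map_mono (restrictTotalDegree_pow_le N m)
  have map_le (m : ℕ) : (restrictTotalDegree (Fin s) k m).map g.toLinearMap ≤ V ^ m := by
    rw [Submodule.map_le_iff_le_comap]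
    intro a ha
    rw [Submodule.mem_comap, AlgHom.toLinearMap_apply, aeval_unique g]
    exact aeval_mem_pow one_mem g_X_mem ((mem_restrictTotalDegree ..).mp ha)
  refine ⟨N, fun m => ?_⟩
  rw [← finrank_restrictTotalDegree (k := k), LinearEquiv.finrank_eq
    (Submodule.equivMapOfInjective g.toLinearMap hg (restrictTotalDegree (Fin s) k m))]
  exact Submodule.finrank_mono ((map_le m).trans (pow_le m))

lemma le_of_forall_pow_le_mul_pow {a b K : ℕ} (h : ∀ m ≥ 1, m ^ a ≤ K * m ^ b) : a ≤ b := by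
  by_contra! hab
  have pow_lt : K * (K + 1) ^ b < (K + 1) ^ a := calc
    K * (K + 1) ^ b < (K + 1) * (K + 1) ^ b := by gcongr; exact K.lt_succ_self
    _ = (K + 1) ^ (b + 1) := (pow_succ' ..).symm
    _ ≤ (K + 1) ^ a := pow_le_pow_right₀ K.succ_pos hab
  exact (h (K + 1) K.succ_pos).not_gt pow_lt

lemma succ_pow_le_factorial_mul_choose (t r : ℕ) :
    (t + 1) ^ r ≤ r.factorial * (t + r).choose r := by
  rw [← Nat.ascFactorial_eq_factorial_mul_choose]
  exact Nat.pow_succ_le_ascFactorial (t + 1) r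

lemma le_of_forall_choose_le {s r N D : ℕ}
    (h : ∀ m, (m + s).choose s ≤ D * (N * m + r).choose r) : s ≤ r := by
  refine le_of_forall_pow_le_mul_pow (K := s.factorial * (D * (N + r) ^ r)) fun m hm => ?_
  calc m ^ s ≤ (m + 1) ^ s := Nat.pow_le_pow_left m.le_succ s
    _ ≤ s.factorial * (m + s).choose s := succ_pow_le_factorial_mul_choose m s
    _ ≤ s.factorial * (D * (N * m + r) ^ r) := by
      gcongr
      exact (h m).trans (Nat.mul_le_mul_left D (Nat.choose_le_pow _ _))
    _ ≤ s.factorial * (D * ((N + r) * m) ^ r) := by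
      gcongr
      nlinarith
    _ = s.factorial * (D * (N + r) ^ r) * m ^ r := by
      rw [mul_pow]
      ring

theorem ringKrullDim_quotient_le_of_hilbF_le {D r : ℕ}
    (h : ∀ m, hilbF k I m ≤ D * (m + r).choose r) :
    ringKrullDim (MvPolynomial (Fin (n + 1)) k ⧸ I) ≤ (r + 1 : ℕ) := by
  rcases subsingleton_or_nontrivial (MvPolynomial (Fin (n + 1)) k ⧸ I) with _ | _
  · simp [ringKrullDim_eq_bot_of_subsingleton]
  obtain ⟨s, g, g_injective, dim_le⟩ :=
    exists_injective_ringKrullDim_le k (MvPolynomial (Fin (n + 1)) k ⧸ I)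
  obtain ⟨N, hN⟩ := exists_choose_le_finrank_map_restrictTotalDegree g_injective
  have choose_le (m) : (m + s).choose s ≤ D * (N * m + (r + 1)).choose (r + 1) := calc
    (m + s).choose s ≤ ∑ i ∈ Finset.range (N * m + 1), hilbF k I i :=
      (hN m).trans (finrank_map_restrictTotalDegree_le_sum_hilbF I _)
    _ ≤ ∑ i ∈ Finset.range (N * m + 1), D * (i + r).choose r := Finset.sum_le_sum fun i _ => h i
    _ = D * (N * m + (r + 1)).choose (r + 1) := by
      rw [← Finset.mul_sum, Nat.sum_range_add_choose, add_assoc]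
  exact dim_le.trans (by exact_mod_cast le_of_forall_choose_le choose_le)

end KrullDimension

/-! ### The degree of a homogeneous ideal -/

section Asymptotics

lemma le_coeff_of_eventually_le_eval {q : Polynomial ℚ} {c : ℚ} {r : ℕ} (hq : q.natDegree ≤ r)
    (h : ∀ᶠ t : ℕ in Filter.atTop, c * (t : ℚ) ^ r ≤ q.eval (t : ℚ)) : c ≤ q.coeff r := by
  by_contra! hc
  -- The factor `X` makes the degree positive also when `r = 0`.
  set u : Polynomial ℚ := (q - .C c * .X ^ r) * .X with hu
  have coeff_u : u.coeff (r + 1) < 0 := by simpa [hu] using hc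
  have natDegree_u : u.natDegree = r + 1 := by
    refine le_antisymm ?_ (Polynomial.le_natDegree_of_ne_zero coeff_u.ne)
    refine Polynomial.natDegree_mul_le.trans (Nat.add_le_add ?_ Polynomial.natDegree_X_le)
    exact (Polynomial.natDegree_sub_le _ _).trans
      (max_le hq (Polynomial.natDegree_C_mul_X_pow_le c r))
  have leadingCoeff_u : u.leadingCoeff ≤ 0 := by
    rw [Polynomial.leadingCoeff, natDegree_u]
    exact coeff_u.le
  have degree_u : 0 < u.degree :=
    Polynomial.natDegree_pos_iff_degree_pos.mp (natDegree_u ▸ r.succ_pos)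
  have u_atBot : Filter.Tendsto (fun t : ℕ => u.eval (t : ℚ)) Filter.atTop Filter.atBot :=
    (u.tendsto_atBot_of_leadingCoeff_nonpos degree_u leadingCoeff_u).comp
      tendsto_natCast_atTop_atTop
  obtain ⟨t, le_eval, eval_neg⟩ := (h.and (u_atBot.eventually_lt_atBot 0)).exists
  refine eval_neg.not_ge ?_
  simp only [hu, Polynomial.eval_mul, Polynomial.eval_sub, Polynomial.eval_C, Polynomial.eval_pow,
    Polynomial.eval_X]
  exact mul_nonneg (sub_nonneg.mpr le_eval) t.cast_nonneg

lemma le_factorial_mul_coeff_of_choose_le {p : Polynomial ℚ} {h : ℕ → ℕ} {D r b : ℕ}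
    (hp : ∀ᶠ m : ℕ in Filter.atTop, (h m : ℚ) = p.eval (m : ℚ)) (hr : p.natDegree ≤ r)
    (hD : ∀ t, D * (t + r).choose r ≤ h (t + b)) : (D : ℚ) ≤ r.factorial * p.coeff r := by
  have le_eval : ∀ᶠ t : ℕ in Filter.atTop,
      (D / r.factorial : ℚ) * (t : ℚ) ^ r ≤ (p.taylor (b : ℚ)).eval (t : ℚ) := by
    filter_upwards [(Filter.tendsto_add_atTop_nat b).eventually hp] with t ht
    have pow_le : (t : ℚ) ^ r ≤ r.factorial * (t + r).choose r := by
      exact_mod_cast (Nat.pow_le_pow_left t.le_succ r).trans (succ_pow_le_factorial_mul_choose t r)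
    calc (D / r.factorial : ℚ) * (t : ℚ) ^ r
        ≤ D / r.factorial * (r.factorial * (t + r).choose r) := by gcongr
      _ = (D * (t + r).choose r : ℕ) := by push_cast; field_simp
      _ ≤ h (t + b) := by exact_mod_cast hD t
      _ = (p.taylor (b : ℚ)).eval (t : ℚ) := by rw [ht, Polynomial.taylor_eval]; push_cast; rfl
  have coeff_taylor : (p.taylor (b : ℚ)).coeff r = p.coeff r := by
    rcases hr.lt_or_eq with hlt | rfl
    · rw [Polynomial.coeff_eq_zero_of_natDegree_lt hlt,
        Polynomial.coeff_eq_zero_of_natDegree_lt (by rwa [Polynomial.natDegree_taylor])]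
    · simpa only [Polynomial.leadingCoeff, Polynomial.natDegree_taylor] using
        Polynomial.leadingCoeff_taylor (b : ℚ) (f := p)
  have le_coeff := le_coeff_of_eventually_le_eval (by rwa [Polynomial.natDegree_taylor]) le_eval
  rwa [coeff_taylor, div_le_iff₀' (by positivity)] at le_coeff

end Asymptotics

section Degree

variable {k : Type*} [Field k] {n : ℕ} {I P : Ideal (MvPolynomial (Fin (n + 1)) k)} {D r b : ℕ}

lemma eventually_hilbF_eq_eval_hilbP (hI : hilbP k I ≠ 0) :
    ∀ᶠ m : ℕ in Filter.atTop, (hilbF k I m : ℚ) = (hilbP k I).eval (m : ℚ) := by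
  unfold hilbP at hI ⊢
  split_ifs at hI ⊢ with h
  · exact h.choose_spec
  · exact absurd rfl hI

lemma le_idealDim_of_choose_le (hI : hilbP k I ≠ 0) (hD : 0 < D)
    (h : ∀ t, D * (t + r).choose r ≤ hilbF k I (t + b)) : r ≤ idealDim k I := by
  by_contra! hr
  have le_zero :=
    le_factorial_mul_coeff_of_choose_le (eventually_hilbF_eq_eval_hilbP hI) hr.le h
  rw [Polynomial.coeff_eq_zero_of_natDegree_lt hr, mul_zero] at le_zero
  exact hD.not_ge (by exact_mod_cast le_zero)

lemma le_idealDeg_of_choose_le (hI : hilbP k I ≠ 0)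
    (h : ∀ t, D * (t + idealDim k I).choose (idealDim k I) ≤ hilbF k I (t + b)) :
    D ≤ idealDeg k I :=
  Nat.le_floor (le_factorial_mul_coeff_of_choose_le (eventually_hilbF_eq_eval_hilbP hI) le_rfl h)

lemma algebraMap_quotient_surjective_of_X_mem (h : ∀ j, X j ∈ P) :
    Function.Surjective (algebraMap k (MvPolynomial (Fin (n + 1)) k ⧸ P)) := by
  intro a
  obtain ⟨F, rfl⟩ := Ideal.Quotient.mk_surjective a
  induction F using MvPolynomial.induction_on with
  | C c => exact ⟨c, rfl⟩
  | add F G hF hG =>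
    obtain ⟨⟨x, hx⟩, y, hy⟩ := hF, hG
    exact ⟨x + y, by rw [map_add, map_add, hx, hy]⟩
  | mul_X F j =>
    refine ⟨0, ?_⟩
    rw [map_zero, eq_comm, Ideal.Quotient.eq_zero_iff_mem]
    exact P.mul_mem_left F (h j)

lemma hilbF_one_ne_zero (h : 0 < ringKrullDim (MvPolynomial (Fin (n + 1)) k ⧸ P)) :
    hilbF k P 1 ≠ 0 := by
  intro hP1
  have surjective := algebraMap_quotient_surjective_of_X_mem (hilbF_one_eq_zero_iff.mp hP1)
  exact h.not_ge ((ringKrullDim_le_of_surjective _ surjective).trans_eq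
    (ringKrullDim_eq_zero_of_field k))

lemma mem_associatedPrimes_of_mem_minimalPrimes {R : Type*} [CommRing R] [IsNoetherianRing R]
    {I P : Ideal R} (hP : P ∈ I.minimalPrimes) : P ∈ associatedPrimes R (R ⧸ I) := by
  apply Module.associatedPrimes.minimalPrimes_annihilator_subset_associatedPrimes
  rwa [Ideal.annihilator_quotient]

lemma IsUnmixed.exists_hilbF_bounds (hunm : IsUnmixed k I (idealDim k I)) (hI : hilbP k I ≠ 0)
    (hP : P ∈ I.minimalPrimes) :
    ∃ D, (∀ m, hilbF k P m ≤ D * (m + idealDim k I).choose (idealDim k I)) ∧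
      ∃ c, ∀ t, D * (t + idealDim k I).choose (idealDim k I) ≤ hilbF k P (t + c) := by
  have dim_eq := hunm P (mem_associatedPrimes_of_mem_minimalPrimes hP)
  obtain ⟨r, D, D_pos, upper, c, lower⟩ := _root_.exists_hilbF_bounds hP.1.1
    (hilbF_one_ne_zero (by rw [dim_eq]; exact Nat.cast_pos.mpr (Nat.succ_pos _)))
  have le_dim : r ≤ idealDim k I :=
    le_idealDim_of_choose_le hI D_pos fun t => (lower t).trans (hilbF_anti hP.1.2 _)
  have dim_le : idealDim k I ≤ r := by
    have succ_le := dim_eq.ge.trans (ringKrullDim_quotient_le_of_hilbF_le upper)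
    exact Nat.le_of_succ_le_succ (Nat.cast_le.mp succ_le)
  obtain rfl : r = idealDim k I := le_antisymm le_dim dim_le
  exact ⟨D, upper, c, lower⟩

theorem hilbF_le_idealDeg_mul_choose (hhom : IsHomogeneousIdeal I) (hrad : I.IsRadical)
    (hunm : IsUnmixed k I (idealDim k I)) (hI : hilbP k I ≠ 0) (m : ℕ) :
    hilbF k I m ≤ idealDeg k I * (m + idealDim k I).choose (idealDim k I) := by
  set d := idealDim k I
  have finite := I.finite_minimalPrimes_of_isNoetherianRing
  have mem_iff {P} : P ∈ finite.toFinset ↔ P ∈ I.minimalPrimes := finite.mem_toFinset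
  have inf_eq : finite.toFinset.inf id = I := by
    rw [Finset.inf_id_eq_sInf, Set.Finite.coe_toFinset, Ideal.sInf_minimalPrimes, hrad.radical]
  choose! D upper lower using fun P (hP : P ∈ I.minimalPrimes) => hunm.exists_hilbF_bounds hI hP
  obtain ⟨b, hb⟩ := exists_sum_le_hilbF_finset_inf (L := fun P t => D P * (t + d).choose d)
    (fun P s t hst => Nat.mul_le_mul_left _ (Nat.choose_le_choose _ (Nat.add_le_add_right hst d)))
    finite.toFinset (fun P hP => hhom.of_mem_minimalPrimes (mem_iff.mp hP))
    (fun P hP => (mem_iff.mp hP).1.1)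
    (by rw [finite.coe_toFinset]; exact setOfPred_minimal_antichain _)
    (fun P hP => lower P (mem_iff.mp hP))
  have sum_le : ∑ P ∈ finite.toFinset, D P ≤ idealDeg k I := by
    refine le_idealDeg_of_choose_le hI (b := b) fun t => ?_
    simpa only [inf_eq, Finset.sum_mul] using hb b le_rfl t
  calc hilbF k I m = hilbF k (finite.toFinset.inf id) m := by rw [inf_eq]
    _ ≤ ∑ P ∈ finite.toFinset, hilbF k P m := hilbF_finset_inf_le _ m
    _ ≤ ∑ P ∈ finite.toFinset, D P * (m + d).choose d :=
      Finset.sum_le_sum fun P hP => upper P (mem_iff.mp hP) m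
    _ = (∑ P ∈ finite.toFinset, D P) * (m + d).choose d := (Finset.sum_mul ..).symm
    _ ≤ idealDeg k I * (m + d).choose d := Nat.mul_le_mul_right _ sum_le

end Degree

/-! ### Hypersurface sections -/

section HypersurfaceSection

lemma le_add_one_of_addChoose_le {D d t : ℕ} {y : ℝ} (hD : D * (d + 1) ≤ t + 1)
    (h : addChoose (t + 1) y ≤ D * addChoose (t + 1) d) : y ≤ d + 1 := by
  refine le_of_addChoose_succ_le (s := t) (by positivity) (h.trans ?_)
  have ratio := addChoose_mul_add (t + 1) (d + 1 : ℝ)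
  rw [add_sub_cancel_right] at ratio
  have nonneg := addChoose_nonneg (t + 1) (by linarith [d.cast_nonneg (α := ℝ)] : -1 ≤ (d : ℝ))
  have hD' : (D * (d + 1) : ℝ) ≤ d + 1 + (t + 1 : ℕ) := by
    have : (D * (d + 1) : ℝ) ≤ (t + 1 : ℕ) := by exact_mod_cast hD
    linarith [d.cast_nonneg (α := ℝ)]
  refine le_of_mul_le_mul_right ?_ (by positivity : (0 : ℝ) < d + 1)
  rw [← ratio]
  calc D * addChoose (t + 1) d * (d + 1) = addChoose (t + 1) d * (D * (d + 1)) := by ring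
    _ ≤ addChoose (t + 1) d * (d + 1 + (t + 1 : ℕ)) := by gcongr

lemma addChoose_sub_one_le {D c t : ℕ} {y : ℝ} (hy : 1 ≤ y) (hD : 2 * (c + 1) * D ≤ t + 1)
    (h : addChoose (t + 1) y ≤ D * addChoose (t + 1) (c + 1)) :
    addChoose (t + 1) (y - 1) ≤ 2 * D * addChoose (t + 1) c := by
  have y_le : y ≤ c + 1 + 1 := by
    have := le_add_one_of_addChoose_le (d := c + 1) (t := t) (by nlinarith) (by exact_mod_cast h)
    exact_mod_cast this
  have ratio_y := addChoose_mul_add (t + 1) y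
  have ratio_c := addChoose_mul_add (t + 1) (c + 1 : ℝ)
  rw [add_sub_cancel_right] at ratio_c
  have c_nonneg : (0 : ℝ) ≤ c := c.cast_nonneg
  have nonneg := addChoose_nonneg (t + 1) (by linarith only [c_nonneg] : -1 ≤ (c : ℝ))
  have mul_le : y * (c + 1 + (t + 1 : ℕ)) ≤ 2 * ((c + 1) * (y + (t + 1 : ℕ))) := by
    have : (0 : ℝ) ≤ (t + 1 : ℕ) := Nat.cast_nonneg _
    nlinarith
  refine le_of_mul_le_mul_right ?_ (by positivity : 0 < (c + 1) * (y + (t + 1 : ℕ)))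
  calc addChoose (t + 1) (y - 1) * ((c + 1) * (y + (t + 1 : ℕ)))
      = addChoose (t + 1) y * (y * (c + 1)) := by linear_combination (c + 1 : ℝ) * ratio_y
    _ ≤ D * addChoose (t + 1) (c + 1) * (y * (c + 1)) := by gcongr
    _ = D * addChoose (t + 1) c * (y * (c + 1 + (t + 1 : ℕ))) := by
      linear_combination -(D * y : ℝ) * ratio_c
    _ ≤ D * addChoose (t + 1) c * (2 * ((c + 1) * (y + (t + 1 : ℕ)))) := by gcongr
    _ = 2 * D * addChoose (t + 1) c * ((c + 1) * (y + (t + 1 : ℕ))) := by ring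

variable {k : Type*} [Field k] {n D c : ℕ} {I : Ideal (MvPolynomial (Fin (n + 1)) k)}

lemma hilbF_succ_le (h : ∀ m, hilbF k I m ≤ D * (m + (c + 1)).choose (c + 1)) {t : ℕ}
    (ht : 2 * (c + 1) * D ≤ t) :
    hilbF k I (t + 1) ≤ hilbF k I t + 2 * D * (t + 1 + c).choose c := by
  rcases le_or_gt (hilbF k I (t + 1)) (hilbF k I t) with hle | hlt
  · exact hle.trans (Nat.le_add_right _ _)
  obtain ⟨x, hx, hxt⟩ := exists_addChoose_succ_eq t
    (c := (hilbF k I (t + 1) : ℝ) - hilbF k I t) (by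
      have : (hilbF k I t + 1 : ℝ) ≤ hilbF k I (t + 1) := by exact_mod_cast hlt
      linarith)
  have green : addChoose (t + 1) (x + 1) ≤ hilbF k I (t + 1) :=
    hilbF_green I (by linarith) (by rw [add_sub_cancel_right, hxt])
  have le_mul : addChoose (t + 1) (x + 1) ≤ D * addChoose (t + 1) (c + 1) := by
    rw [← Nat.cast_succ, addChoose_natCast]
    exact green.trans (by exact_mod_cast h (t + 1))
  have diff_le := addChoose_sub_one_le (by linarith) (ht.trans t.le_succ) le_mul
  rw [add_sub_cancel_right, hxt, addChoose_natCast, sub_le_iff_le_add'] at diff_le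
  exact_mod_cast diff_le

lemma hilbF_add_le (h : ∀ m, hilbF k I m ≤ D * (m + (c + 1)).choose (c + 1)) {t : ℕ}
    (ht : 2 * (c + 1) * D ≤ t) (e : ℕ) :
    hilbF k I (t + e) ≤ hilbF k I t + 2 * e * D * (t + e + c).choose c := by
  induction e with
  | zero => simp
  | succ e ih =>
    have choose_le : (t + e + c).choose c ≤ (t + e + 1 + c).choose c :=
      Nat.choose_le_choose c (by omega)
    calc hilbF k I (t + e + 1)
        ≤ hilbF k I (t + e) + 2 * D * (t + e + 1 + c).choose c :=
          hilbF_succ_le h (ht.trans (t.le_add_right e))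
      _ ≤ hilbF k I t + 2 * e * D * (t + e + 1 + c).choose c
            + 2 * D * (t + e + 1 + c).choose c := by
          gcongr
          exact ih.trans (by gcongr)
      _ = hilbF k I t + 2 * (e + 1) * D * (t + e + 1 + c).choose c := by ring

lemma choose_succ_le_two_mul_mul_choose {m e : ℕ} (hme : m < 2 * e) (c : ℕ) :
    (m + (c + 1)).choose (c + 1) ≤ 2 * e * (m + c).choose c := by
  refine Nat.le_of_mul_le_mul_right ?_ c.succ_pos
  calc (m + c + 1).choose (c + 1) * (c + 1) = (m + c + 1) * (m + c).choose c :=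
        (Nat.add_one_mul_choose_eq (m + c) c).symm
    _ ≤ 2 * e * (c + 1) * (m + c).choose c := by
        gcongr
        nlinarith
    _ = 2 * e * (m + c).choose c * (c + 1) := by ring

lemma hilbF_sup_span_singleton_le {e m : ℕ} (hhom : IsHomogeneousIdeal I)
    (h : ∀ m, hilbF k I m ≤ D * (m + (c + 1)).choose (c + 1))
    {f : MvPolynomial (Fin (n + 1)) k} (hf : f.IsHomogeneous e)
    (hreg : ∀ g, f * g ∈ I → g ∈ I) (hm : 4 * (c + 1) * D ≤ m) :
    hilbF k (I ⊔ Ideal.span {f}) m ≤ 2 * e * D * (m + c).choose c := by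
  rcases Nat.lt_or_ge m (2 * e) with hme | hem
  · calc hilbF k (I ⊔ Ideal.span {f}) m ≤ hilbF k I m := hilbF_anti le_sup_left m
      _ ≤ D * (m + (c + 1)).choose (c + 1) := h m
      _ ≤ D * (2 * e * (m + c).choose c) := by
        gcongr
        exact choose_succ_le_two_mul_mul_choose hme c
      _ = 2 * e * D * (m + c).choose c := by ring
  · obtain ⟨t, rfl⟩ := Nat.exists_eq_add_of_le' (show e ≤ m by omega)
    have ht : 2 * (c + 1) * D ≤ t := by linarith
    have exact_sequence := hilbF_add hhom hf (fun g => ⟨I.mul_mem_left f, hreg g⟩) t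
    have telescope := hilbF_add_le h ht e
    omega

end HypersurfaceSection

theorem hilbert_function_hypersurface_section_general {k : Type*} [Field k] {n d e : ℕ}
    (hd : 1 ≤ d) (I : Ideal (MvPolynomial (Fin (n + 1)) k)) (hhom : IsHomogeneousIdeal I)
    (hrad : I.IsRadical) (hunm : IsUnmixed k I d) (hdim : idealDim k I = d)
    (f : MvPolynomial (Fin (n + 1)) k) (hf : f.IsHomogeneous e)
    (hreg : ∀ g, f * g ∈ I → g ∈ I) (m : ℕ) (hm : 4 * d * idealDeg k I ≤ m) :
    hilbF k (I ⊔ Ideal.span {f}) m ≤ 2 * e * idealDeg k I * (m + d - 1).choose (d - 1) := by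
  have hilbP_ne_zero : hilbP k I ≠ 0 := by
    intro h
    rw [idealDim, h, Polynomial.natDegree_zero] at hdim
    omega
  have upper := hilbF_le_idealDeg_mul_choose hhom hrad (hdim.symm ▸ hunm) hilbP_ne_zero
  obtain ⟨c, rfl⟩ := Nat.exists_eq_add_of_le' hd
  rw [hdim] at upper
  exact hilbF_sup_span_singleton_le hhom upper hf hreg hm

/-- Hilbert function of a hypersurface section of a homogeneous
unmixed radical ideal of projective dimension `d ≥ 1`:
`h_{(I,f)}(m) ≤ 3 · deg f · deg I · C(m+d−1, d−1)` for `m ≥ 5·d·deg I`. -/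
theorem hilbert_function_hypersurface_section {k : Type*} [Field k]
    [PerfectField k] {n d e : ℕ} (hd : 1 ≤ d)
    (I : Ideal (MvPolynomial (Fin (n+1)) k)) (hhom : IsHomogeneousIdeal I)
    (hrad : I.IsRadical) (hunm : IsUnmixed k I d) (hne : hilbP k I ≠ 0)
    (hdim : idealDim k I = d)
    (f : MvPolynomial (Fin (n+1)) k) (hf : f.IsHomogeneous e) (hf0 : f ≠ 0)
    (hreg : ∀ g, f * g ∈ I → g ∈ I) :
    ∀ m : ℕ, 5 * d * idealDeg k I ≤ m →
      hilbF k (I ⊔ Ideal.span {f}) m ≤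
        3 * e * idealDeg k I * Nat.choose (m + d - 1) (d - 1) := by
  intro m hm
  refine (hilbert_function_hypersurface_section_general hd I hhom hrad hunm hdim f hf hreg m
    (hm.trans' ?_)).trans ?_ <;> gcongr <;> norm_num
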